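/- arXiv:2201.03695 — 3 statements merged into one kernel-verified Lean document; each statement's English description precedes it below -/
import Mathlib

section
/- Let G be a finite group and P a finite T0 topological space equipped with a continuous G-action. Then the equivariant topological complexity of P equals its equivariant combinatorial complexity: TC_G(P) = CC_G(P). -/
/-! ### Module A: equivariant TC / CC / LS for topological G-spaces -/

/-- The zigzag order `0 < 1 > 2 < 3 > ⋯` on natural numbers. -/
def zigzagLE (i j : ℕ) : Prop := i = j ∨ (i % 2 = 0 ∧ (j = i + 1 ∨ i = j + 1))

/-- The combinatorial interval `J m = {0, 1, …, m}`. -/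
def J (m : ℕ) : Type := Fin (m + 1)

namespace J

/-- The underlying natural number of a point of `J m`. -/
def val {m : ℕ} (i : J m) : ℕ := Fin.val i

/-- The initial point `0` of the combinatorial interval. -/
def zero (m : ℕ) : J m := (0 : Fin (m + 1))

/-- The final point `m` of the combinatorial interval. -/
def last (m : ℕ) : J m := Fin.last m

/-- The topology on `J m` whose open sets are the down-closed sets for the zigzag order. -/
instance (m : ℕ) : TopologicalSpace (J m) where
  IsOpen U := ∀ ⦃a⦄, a ∈ U → ∀ ⦃b⦄, zigzagLE (J.val b) (J.val a) → b ∈ U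
  isOpen_univ := fun a _ b _ => Set.mem_univ b
  isOpen_inter := fun s t hs ht a ha b hba => ⟨hs ha.1 hba, ht ha.2 hba⟩
  isOpen_sUnion := fun S hS a ha b hba => by
    obtain ⟨t, htS, hat⟩ := ha
    exact ⟨t, htS, hS t htS hat hba⟩

end J

section Equivariant

variable (G : Type*) [Group G]

/-- A set is `G`-invariant if it is stable under the action of every group element. -/
def GInvariant {α : Type*} [SMul G α] (U : Set α) : Prop :=
  ∀ g : G, ∀ x ∈ U, g • x ∈ U

variable (X : Type*) [TopologicalSpace X] [MulAction G X]

/-- `U ⊆ X × X` admits a continuous equivariant section of the free path fibration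
`π : X^I → X × X`, `α ↦ (α 0, α 1)`. -/
def EqNavigable (U : Set (X × X)) : Prop :=
  ∃ s : U → C(unitInterval, X), Continuous s ∧
    (∀ u : U, s u 0 = (u : X × X).1 ∧ s u 1 = (u : X × X).2) ∧
    (∀ (g : G) (u : U) (h : g • (u : X × X) ∈ U) (t : unitInterval),
      s ⟨g • (u : X × X), h⟩ t = g • s u t)

/-- The equivariant topological complexity: the least `k` such that `X × X` admits a cover by
`k` open invariant sets, each admitting a continuous equivariant section of the free path
fibration; `⊤` if there is no such cover. -/
noncomputable def eqTC : ℕ∞ :=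
  sInf {k : ℕ∞ | ∃ n : ℕ, k = n ∧ ∃ U : Fin n → Set (X × X),
    (∀ i, IsOpen (U i)) ∧ (∀ i, GInvariant G (U i)) ∧ (⋃ i, U i) = Set.univ ∧
    ∀ i, EqNavigable G X (U i)}

/-- `U ⊆ X × X` admits a continuous equivariant section of the combinatorial path fibration
`q_m : X^{J_m} → X × X`, `β ↦ (β 0, β m)`. -/
def EqNavigableJ (m : ℕ) (U : Set (X × X)) : Prop :=
  ∃ s : U → C(J m, X), Continuous s ∧
    (∀ u : U, s u (J.zero m) = (u : X × X).1 ∧ s u (J.last m) = (u : X × X).2) ∧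
    (∀ (g : G) (u : U) (h : g • (u : X × X) ∈ U) (t : J m),
      s ⟨g • (u : X × X), h⟩ t = g • s u t)

/-- The equivariant combinatorial complexity with paths of length `m`: the least `k` such that
`X × X` admits a cover by `k` open invariant sets, each admitting a continuous equivariant
section of the combinatorial path fibration `q_m`; `⊤` if there is no such cover. -/
noncomputable def eqCCm (m : ℕ) : ℕ∞ :=
  sInf {k : ℕ∞ | ∃ n : ℕ, k = n ∧ ∃ U : Fin n → Set (X × X),
    (∀ i, IsOpen (U i)) ∧ (∀ i, GInvariant G (U i)) ∧ (⋃ i, U i) = Set.univ ∧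
    ∀ i, EqNavigableJ G X m (U i)}

/-- The equivariant combinatorial complexity: the minimum over all `m ≥ 1` of `eqCCm`. -/
noncomputable def eqCC : ℕ∞ := ⨅ m : ℕ, eqCCm G X (m + 1)

/-- `U ⊆ X` is `G`-categorical for the orbit of `x₀`: the inclusion of `U` into `X` is
`G`-homotopic to a map taking values in the orbit of `x₀`. -/
def GCategoricalAt (U : Set X) (x₀ : X) : Prop :=
  ∃ F : U × unitInterval → X, Continuous F ∧
    (∀ u : U, F (u, 0) = (u : X)) ∧
    (∀ (g : G) (u : U) (h : g • (u : X) ∈ U) (t : unitInterval),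
      F (⟨g • (u : X), h⟩, t) = g • F (u, t)) ∧
    (∀ u : U, F (u, 1) ∈ MulAction.orbit G x₀)

/-- `U ⊆ X` is `G`-categorical: the inclusion of `U` into `X` is `G`-homotopic to a map taking
values in a single orbit. -/
def GCategorical (U : Set X) : Prop :=
  ∃ x₀ : X, GCategoricalAt G X U x₀

/-- The equivariant Lusternik–Schnirelmann category: the least `k` such that `X` is covered by
`k` open invariant `G`-categorical sets; `⊤` if there is no such cover. -/
noncomputable def eqLS : ℕ∞ :=
  sInf {k : ℕ∞ | ∃ n : ℕ, k = n ∧ ∃ U : Fin n → Set X,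
    (∀ i, IsOpen (U i)) ∧ (∀ i, GInvariant G (U i)) ∧ (⋃ i, U i) = Set.univ ∧
    ∀ i, GCategorical G X (U i)}

end Equivariant

/-!
A section over `U` of either path fibration is a path, continuous or combinatorial, from the first
to the second projection in the space of continuous equivariant maps `U → X` with the topology of
pointwise convergence. When `X` is finite this space is finite, hence Alexandrov-discrete, and in
such a space every point of the connected component of `x` is reached from `x` by a combinatorial
path. Conversely `J m` is path connected, so combinatorial sections can be reparametrized into
continuous ones. The lengths needed for the finitely many members of a cover have a common bound.
-/

open Filter

section Alexandrov

variable {A B : Type*} [TopologicalSpace A] [TopologicalSpace B] {x y : A}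

lemma joined_of_specializes (h : x ⤳ y) : Joined x y :=
  (h.joinedIn (Set.mem_univ x) (Set.mem_univ y)).joined

variable [AlexandrovDiscrete A]

lemma continuous_of_forall_specializes {f : A → B} (hf : ∀ ⦃x y⦄, x ⤳ y → f x ⤳ f y) :
    Continuous f where
  isOpen_preimage _ hs :=
    isOpen_iff_forall_specializes.2 fun _ _ hxy hy => (hf hxy).mem_open hs hy

lemma isClopen_of_forall_specializes {s : Set A} (hs : ∀ ⦃x y⦄, x ⤳ y → (x ∈ s ↔ y ∈ s)) :
    IsClopen s where
  left := isOpen_compl_iff.1 <| isOpen_iff_forall_specializes.2 fun _ _ hxy hy hx =>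
    hy ((hs hxy).1 hx)
  right := isOpen_iff_forall_specializes.2 fun _ _ hxy => (hs hxy).2

end Alexandrov

namespace J

variable {m : ℕ}

instance : Finite (J m) := inferInstanceAs (Finite (Fin (m + 1)))

lemma specializes_iff {i j : J m} : i ⤳ j ↔ zigzagLE i.val j.val := by
  refine ⟨fun h => ?_, fun h => specializes_iff_forall_open.2 fun _ hs hj => hs hj h⟩
  have isOpen_down : IsOpen {k : J m | zigzagLE k.val j.val} := by
    intro a ha b hba
    simp only [Set.mem_ofPred_eq, zigzagLE] at ha hba ⊢
    omega
  exact h.mem_open isOpen_down (Or.inl rfl)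

lemma joined_of_val_succ {i j : J m} (h : j.val = i.val + 1) : Joined i j := by
  rcases Nat.mod_two_eq_zero_or_one i.val with hi | hi
  · exact joined_of_specializes (specializes_iff.2 (Or.inr ⟨hi, Or.inl h⟩))
  · exact (joined_of_specializes (specializes_iff.2 (Or.inr ⟨by omega, Or.inr h⟩))).symm

lemma joined_zero (i : J m) : Joined (zero m) i :=
  Fin.induction (motive := fun i => Joined (zero m) i) (Joined.refl _)
    (fun _ ih => ih.trans (joined_of_val_succ rfl)) i

end J

section Fence

variable {Y : Type*} [TopologicalSpace Y] {f : ℕ → Y} {x y z : Y} {m n : ℕ}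

/-- `f` is a combinatorial path from `x` to `y` that is stationary from index `m` on. Indexing by
`ℕ` instead of `J m` lets paths be prolonged without changing their domain. -/
structure IsFence (f : ℕ → Y) (x y : Y) (m : ℕ) : Prop where
  specializes : ∀ ⦃i j⦄, zigzagLE i j → f i ⤳ f j
  source : f 0 = x
  target : ∀ ⦃i⦄, m ≤ i → f i = y

namespace IsFence

lemma const (x : Y) : IsFence (fun _ => x) x x 0 :=
  ⟨fun _ _ _ => specializes_rfl, rfl, fun _ _ => rfl⟩

lemma extend (hf : IsFence f x y m) (hmn : m < n) (hodd : n % 2 = 1 → y ⤳ z)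
    (heven : n % 2 = 0 → z ⤳ y) : IsFence (fun i => if i < n then f i else z) x z n where
  source := by simp only [Nat.zero_lt_of_lt hmn, if_true, hf.source]
  target i hi := if_neg hi.not_gt
  specializes i j hij := by
    split_ifs with hi hj hj
    · exact hf.specializes hij
    · obtain ⟨hmi, hn⟩ : m ≤ i ∧ n % 2 = 1 := by unfold zigzagLE at hij; omega
      exact hf.target hmi ▸ hodd hn
    · obtain ⟨hmj, hn⟩ : m ≤ j ∧ n % 2 = 0 := by unfold zigzagLE at hij; omega
      exact hf.target hmj ▸ heven hn
    · exact specializes_rfl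

/-- The restriction of a fence to a combinatorial interval. -/
def toContinuousMap (hf : IsFence f x y m) (n : ℕ) : C(J n, Y) where
  toFun i := f i.val
  continuous_toFun := continuous_of_forall_specializes fun _ _ hij =>
    hf.specializes (J.specializes_iff.1 hij)

end IsFence

lemma exists_isFence_of_mem_connectedComponent [AlexandrovDiscrete Y]
    (hy : y ∈ connectedComponent x) : ∃ f m, IsFence f x y m := by
  have isClopen_reachable : IsClopen {y | ∃ f m, IsFence f x y m} := by
    refine isClopen_of_forall_specializes fun y z hyz => ⟨?_, ?_⟩
    · rintro ⟨f, m, hf⟩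
      exact ⟨_, 2 * m + 1, hf.extend (by omega) (fun _ => hyz) (by omega)⟩
    · rintro ⟨f, m, hf⟩
      exact ⟨_, 2 * m + 2, hf.extend (by omega) (by omega) (fun _ => hyz)⟩
  exact isClopen_reachable.connectedComponent_subset ⟨_, _, IsFence.const x⟩ hy

end Fence

section Navigable

variable {G X : Type*} [Group G] [TopologicalSpace X] [MulAction G X] {U : Set (X × X)} {m : ℕ}

lemma EqNavigableJ.eqNavigable (h : EqNavigableJ G X m U) : EqNavigable G X U := by
  obtain ⟨s, hs, hends, hequiv⟩ := h
  obtain ⟨γ⟩ := J.joined_zero (J.last m)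
  refine ⟨fun u => (s u).comp γ.toContinuousMap, (ContinuousMap.continuous_precomp _).comp hs,
    fun u => ?_, fun g u h t => hequiv g u h (γ t)⟩
  simpa using hends u

/-- The continuous equivariant maps `U → X` on a not necessarily invariant subset `U` of a
`G`-space. As a subspace of a product it carries the topology of pointwise convergence, for which
a section over `U` of a path fibration of `X` is a path in this space. -/
def equivariantMaps (G : Type*) {Z : Type*} [TopologicalSpace Z] [SMul G Z] (U : Set Z)
    (X : Type*) [TopologicalSpace X] [SMul G X] : Set (U → X) :=
  {f | Continuous f ∧ ∀ (g : G) (u : U) (h : g • (u : Z) ∈ U), f ⟨g • (u : Z), h⟩ = g • f u}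

namespace equivariantMaps

variable (G U)

/-- The starting point of a section over `U`, as a point of the space of equivariant maps. -/
def fst : equivariantMaps G U X :=
  ⟨fun u => (u : X × X).1, continuous_fst.comp continuous_subtype_val, fun _ _ _ => rfl⟩

/-- The end point of a section over `U`, as a point of the space of equivariant maps. -/
def snd : equivariantMaps G U X :=
  ⟨fun u => (u : X × X).2, continuous_snd.comp continuous_subtype_val, fun _ _ _ => rfl⟩

end equivariantMaps

lemma EqNavigable.joined_fst_snd (h : EqNavigable G X U) :
    Joined (equivariantMaps.fst G U) (equivariantMaps.snd G U) := by
  obtain ⟨s, hs, hends, hequiv⟩ := h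
  exact ⟨{
    toFun t := ⟨fun u => s u t, (continuous_eval_const t).comp hs, fun g u h => hequiv g u h t⟩
    continuous_toFun := (continuous_pi fun u => (s u).continuous).subtype_mk _
    source' := Subtype.ext (funext fun u => (hends u).1)
    target' := Subtype.ext (funext fun u => (hends u).2) }⟩

lemma EqNavigableJ.of_continuousMap [AlexandrovDiscrete X] (β : C(J m, equivariantMaps G U X))
    (hfst : β (J.zero m) = equivariantMaps.fst G U)
    (hsnd : β (J.last m) = equivariantMaps.snd G U) : EqNavigableJ G X m U := by
  have continuous_eval (u : U) : Continuous fun i => (β i : U → X) u :=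
    (continuous_apply u).comp (continuous_subtype_val.comp β.continuous)
  refine ⟨fun u => ⟨fun i => (β i : U → X) u, continuous_eval u⟩,
    continuous_of_forall_specializes fun u v huv => ?_, fun u => ⟨?_, ?_⟩,
    fun g u h i => (β i).2.2 g u h⟩
  · exact ContinuousMap.specializes_coe.1 (specializes_pi.2 fun i => huv.map (β i).2.1)
  · exact congrArg (fun f : equivariantMaps G U X => (f : U → X) u) hfst
  · exact congrArg (fun f : equivariantMaps G U X => (f : U → X) u) hsnd

lemma EqNavigable.eventually_eqNavigableJ [Finite X] (h : EqNavigable G X U) :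
    ∀ᶠ m in atTop, EqNavigableJ G X m U := by
  obtain ⟨f, k, hf⟩ := exists_isFence_of_mem_connectedComponent
    (pathComponent_subset_component _ h.joined_fst_snd)
  filter_upwards [eventually_ge_atTop k] with m hkm
  exact .of_continuousMap (hf.toContinuousMap m) hf.source (hf.target hkm)

end Navigable

section InvariantCover

variable (G : Type*) {Z ι : Type*} [TopologicalSpace Z] [SMul G Z]

/-- The least number of open invariant subsets satisfying `N` needed to cover `Z`, and `⊤` if
there is no finite cover of this kind: the common form of the complexities `eqTC` and `eqCCm`. -/
noncomputable def invariantCoverNumber (N : Set Z → Prop) : ℕ∞ :=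
  sInf {k : ℕ∞ | ∃ n : ℕ, k = n ∧ ∃ U : Fin n → Set Z,
    (∀ i, IsOpen (U i)) ∧ (∀ i, GInvariant G (U i)) ∧ (⋃ i, U i) = Set.univ ∧ ∀ i, N (U i)}

lemma invariantCoverNumber_anti {N N' : Set Z → Prop} (h : ∀ U, N U → N' U) :
    invariantCoverNumber G N' ≤ invariantCoverNumber G N := by
  refine sInf_le_sInf ?_
  rintro _ ⟨n, rfl, U, hopen, hinv, hcover, hN⟩
  exact ⟨n, rfl, U, hopen, hinv, hcover, fun i => h _ (hN i)⟩

lemma iInf_invariantCoverNumber_le_of_eventually (l : Filter ι) [l.NeBot]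
    (N : ι → Set Z → Prop) :
    ⨅ a, invariantCoverNumber G (N a) ≤ invariantCoverNumber G fun U => ∀ᶠ a in l, N a U := by
  refine le_sInf ?_
  rintro _ ⟨n, rfl, U, hopen, hinv, hcover, hN⟩
  obtain ⟨a, ha⟩ := (eventually_all.2 hN).exists
  exact (iInf_le _ a).trans (sInf_le ⟨n, rfl, U, hopen, hinv, hcover, ha⟩)

end InvariantCover

section Complexity

variable (G X : Type*) [Group G] [TopologicalSpace X] [MulAction G X]

lemma eqTC_le_eqCC : eqTC G X ≤ eqCC G X :=
  le_iInf fun _ => invariantCoverNumber_anti G fun _ => EqNavigableJ.eqNavigable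

lemma eqCC_le_eqTC [Finite X] : eqCC G X ≤ eqTC G X :=
  calc eqCC G X
    _ ≤ invariantCoverNumber G fun U => ∀ᶠ m in atTop, EqNavigableJ G X (m + 1) U :=
      iInf_invariantCoverNumber_le_of_eventually G atTop fun m => EqNavigableJ G X (m + 1)
    _ ≤ eqTC G X := invariantCoverNumber_anti G fun _ h =>
      (tendsto_add_atTop_nat 1).eventually h.eventually_eqNavigableJ

end Complexity

theorem eqTC_eq_eqCC_general (G P : Type*) [Group G] [TopologicalSpace P] [Finite P]
    [MulAction G P] : eqTC G P = eqCC G P :=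
  le_antisymm (eqTC_le_eqCC G P) (eqCC_le_eqTC G P)

/-- For any finite `T₀` `G`-space `P` (a finite group `G` acting by
homeomorphisms on a finite `T₀` space `P`), the equivariant topological complexity of `P`
equals its equivariant combinatorial complexity. -/
theorem eqTC_eq_eqCC (G P : Type*) [Group G] [Finite G]
    [TopologicalSpace P] [Finite P] [T0Space P]
    [MulAction G P] [ContinuousConstSMul G P] :
    eqTC G P = eqCC G P :=
  eqTC_eq_eqCC_general G P
end

section
/- Let G be a finite group and X a finite T0 G-space which is G-connected. Then for every n ≥ 2, the equivariant topological complexity of the n-fold barycentric subdivision sd^n(X) is finite: TC_G(sd^n(X)) < ∞. -/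
/-! ### Module B: finite G-posets (= finite T₀ G-spaces) and barycentric subdivision -/

/-- The down-set (Alexandrov) topology on a preorder: open sets are the downwards-closed
sets.  Under the identification of finite `T₀` spaces with finite posets via the
specialization order, this recovers the topology of the finite space. -/
def downTop (P : Type*) [Preorder P] : TopologicalSpace P where
  IsOpen U := ∀ ⦃a⦄, a ∈ U → ∀ ⦃b⦄, b ≤ a → b ∈ U
  isOpen_univ := fun a _ b _ => Set.mem_univ b
  isOpen_inter := fun s t hs ht a ha b hba => ⟨hs ha.1 hba, ht ha.2 hba⟩
  isOpen_sUnion := fun S hS a ha b hba => by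
    obtain ⟨t, htS, hat⟩ := ha
    exact ⟨t, htS, hS t htS hat hba⟩

/-- A finite `T₀` `G`-space, encoded as a finite poset (via the specialization order)
with an action of `G` by monotone maps (equivalently, by homeomorphisms). -/
structure FinGPoset (G : Type) [Group G] : Type 1 where
  /-- the underlying set of points -/
  carrier : Type
  [fin : Fintype carrier]
  [po : PartialOrder carrier]
  /-- the action of `G` -/
  smul : G → carrier → carrier
  smul_one : ∀ x, smul 1 x = x
  smul_mul : ∀ g h x, smul (g * h) x = smul g (smul h x)
  smul_mono : ∀ g : G, ∀ x y : carrier, x ≤ y → smul g x ≤ smul g y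

attribute [instance] FinGPoset.fin FinGPoset.po

namespace FinGPoset

variable {G : Type} [Group G]

/-- The nonempty chains of a poset. -/
def chains (P : Type) [PartialOrder P] : Type :=
  {c : Finset P // c.Nonempty ∧ ∀ x ∈ c, ∀ y ∈ c, x ≤ y ∨ y ≤ x}

noncomputable instance (P : Type) [PartialOrder P] [Fintype P] : Fintype (chains P) := by
  classical exact Subtype.fintype _

instance (P : Type) [PartialOrder P] : PartialOrder (chains P) :=
  Subtype.partialOrder _

/-- The barycentric subdivision of a finite `T₀` `G`-space: the poset of nonempty chains,
ordered by inclusion, with the induced `G`-action `g • {p₀ < ⋯ < pₙ} = {g•p₀ < ⋯ < g•pₙ}`. -/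
noncomputable def sd (X : FinGPoset G) : FinGPoset G := by
  classical
  exact
  { carrier := chains X.carrier
    smul := fun g c => ⟨c.val.image (X.smul g), c.prop.1.image _, by
      intro x hx y hy
      rcases Finset.mem_image.mp hx with ⟨a, ha, rfl⟩
      rcases Finset.mem_image.mp hy with ⟨b, hb, rfl⟩
      rcases c.prop.2 a ha b hb with h | h
      · exact Or.inl (X.smul_mono g _ _ h)
      · exact Or.inr (X.smul_mono g _ _ h)⟩
    smul_one := fun c => by
      apply Subtype.ext
      show c.val.image (X.smul 1) = c.val
      rw [Finset.image_congr (g := id) (fun x _ => X.smul_one x), Finset.image_id]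
    smul_mul := fun g h c => by
      apply Subtype.ext
      show c.val.image (X.smul (g * h)) = (c.val.image (X.smul h)).image (X.smul g)
      rw [Finset.image_image]
      exact Finset.image_congr (fun x _ => X.smul_mul g h x)
    smul_mono := fun g c d hcd => by
      show c.val.image (X.smul g) ≤ d.val.image (X.smul g)
      exact Finset.image_subset_image hcd }

/-- Iterated barycentric subdivision. -/
noncomputable def sdIter : ℕ → FinGPoset G → FinGPoset G
  | 0, X => X
  | (n + 1), X => (sdIter n X).sd

/-- The `G`-action on a finite `T₀` `G`-space, as a `MulAction`. -/
def mulAction (X : FinGPoset G) : MulAction G X.carrier where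
  smul := X.smul
  one_smul := X.smul_one
  mul_smul := X.smul_mul

/-- The set of points of `X` fixed by every element of the subgroup `H`. -/
def fixedBy (X : FinGPoset G) (H : Subgroup G) : Set X.carrier :=
  {x | ∀ h ∈ H, X.smul h x = x}

/-- The set of points of `X` fixed by every element of `G`. -/
def fixedSet (X : FinGPoset G) : Set X.carrier :=
  {x | ∀ g : G, X.smul g x = x}

/-- `X` is `G`-connected: for every subgroup `H ≤ G`, the fixed-point set `X^H`
(with the topology of the finite space) is path-connected. -/
def GConnected (X : FinGPoset G) : Prop :=
  letI : TopologicalSpace X.carrier := downTop X.carrier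
  ∀ H : Subgroup G, ∀ a ∈ X.fixedBy H, ∀ b ∈ X.fixedBy H, JoinedIn (X.fixedBy H) a b

/-- A subset of a finite `T₀` `G`-space is open iff it is open in the down-set topology. -/
def IsOpenP (X : FinGPoset G) (U : Set X.carrier) : Prop :=
  letI : TopologicalSpace X.carrier := downTop X.carrier
  IsOpen U

/-- The equivariant topological complexity of a finite `T₀` `G`-space. -/
noncomputable def TCG (X : FinGPoset G) : ℕ∞ :=
  letI : TopologicalSpace X.carrier := downTop X.carrier
  letI : MulAction G X.carrier := X.mulAction
  eqTC G X.carrier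

/-- The equivariant Lusternik–Schnirelmann category of a finite `T₀` `G`-space. -/
noncomputable def LSG (X : FinGPoset G) : ℕ∞ :=
  letI : TopologicalSpace X.carrier := downTop X.carrier
  letI : MulAction G X.carrier := X.mulAction
  eqLS G X.carrier

/-- The saturation `G · U` of a subset `U` of a `G`-space. -/
def satur (X : FinGPoset G) (U : Set X.carrier) : Set X.carrier :=
  {v | ∃ g : G, ∃ u ∈ U, v = X.smul g u}

/-- A subset of a finite `T₀` `G`-space is `G`-categorical: it is invariant and its
inclusion is `G`-homotopic to a map taking values in a single orbit. -/
def GCat (X : FinGPoset G) (U : Set X.carrier) : Prop :=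
  letI : TopologicalSpace X.carrier := downTop X.carrier
  letI : MulAction G X.carrier := X.mulAction
  GInvariant G U ∧ GCategorical G X.carrier U

end FinGPoset

/-!
Suppose that finitely many open invariant sets cover a `G`-space and that each deforms equivariantly
onto a single orbit. The product of two orbits splits into diagonal orbits `G • (p, q)`; over the
part of the product of two such sets lying above `G • (p, q)` one deforms to `G • (p, q)` and
transports a path from `p` to `q` inside the fixed set of their common stabilizer, so that finite
category implies finite topological complexity.

For a finite poset, an element of `G` that carries a member of a chain to a member of the same chain
fixes it. In a subdivision an element fixing a point fixes everything below it. After a second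
subdivision the saturated minimal neighbourhood of a chain `x` therefore has a well-defined
equivariant map onto the orbit of the least member of `x`, and this member is a lower bound of the
chains sent to it, so coning off deforms the neighbourhood onto that orbit.
-/

open MulAction Set Topology unitInterval
open ContinuousMap (HomotopicWith)

section Covers

variable {G X : Type*} [Group G] [TopologicalSpace X] [MulAction G X]

theorem eqTC_lt_top_of_cover {ι : Type*} [Finite ι] {U : ι → Set (X × X)}
    (hopen : ∀ i, IsOpen (U i)) (hinv : ∀ i, GInvariant G (U i)) (hcover : ⋃ i, U i = univ)
    (hnav : ∀ i, EqNavigable G X (U i)) : eqTC G X < ⊤ := by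
  obtain ⟨n, ⟨e⟩⟩ := Finite.exists_equiv_fin ι
  have hcover' : ⋃ k, U (e.symm k) = univ := (e.symm.surjective.iUnion_comp U).trans hcover
  exact sInf_lt_iff.2 ⟨n, ⟨n, rfl, U ∘ e.symm, fun _ => hopen _, fun _ => hinv _, hcover',
    fun _ => hnav _⟩, ENat.natCast_lt_top n⟩

theorem eqLS_lt_top_of_cover {ι : Type*} [Finite ι] {U : ι → Set X}
    (hopen : ∀ i, IsOpen (U i)) (hinv : ∀ i, GInvariant G (U i)) (hcover : ⋃ i, U i = univ)
    (hcat : ∀ i, GCategorical G X (U i)) : eqLS G X < ⊤ := by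
  obtain ⟨n, ⟨e⟩⟩ := Finite.exists_equiv_fin ι
  have hcover' : ⋃ k, U (e.symm k) = univ := (e.symm.surjective.iUnion_comp U).trans hcover
  exact sInf_lt_iff.2 ⟨n, ⟨n, rfl, U ∘ e.symm, fun _ => hopen _, fun _ => hinv _, hcover',
    fun _ => hcat _⟩, ENat.natCast_lt_top n⟩

theorem exists_categorical_cover_of_eqLS_lt_top (h : eqLS G X < ⊤) :
    ∃ (n : ℕ) (U : Fin n → Set X), (∀ i, IsOpen (U i)) ∧ (∀ i, GInvariant G (U i)) ∧
      ⋃ i, U i = univ ∧ ∀ i, GCategorical G X (U i) := by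
  obtain ⟨_, ⟨n, -, hU⟩, -⟩ := sInf_lt_iff.1 h
  exact ⟨n, hU⟩

end Covers

section EquivariantHomotopy

variable (G : Type*) [Group G] {X Y Z : Type*} [TopologicalSpace X] [TopologicalSpace Y]
  [TopologicalSpace Z] [MulAction G X] [MulAction G Y] [MulAction G Z]

/-- Equivariance of a map defined on a subset `U` of a `G`-space. The subset need not be invariant:
the condition is imposed only where both `u` and `g • u` lie in `U`. As a predicate on `C(U, X)` it
turns `ContinuousMap.HomotopicWith` into the relation of `G`-homotopy. -/
def EquivariantOn (U : Set Z) (f : C(U, X)) : Prop :=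
  ∀ (g : G) (u : U) (h : g • (u : Z) ∈ U), f ⟨g • (u : Z), h⟩ = g • f u

variable {G} {U : Set Z}

theorem EquivariantOn.right_of_homotopicWith {f₀ f₁ : C(U, X)}
    (h : HomotopicWith f₀ f₁ (EquivariantOn G U)) : EquivariantOn G U f₁ := by
  obtain ⟨H⟩ := h
  intro g u hu
  exact (H.apply_one _).symm.trans ((H.prop 1 g u hu).trans (congrArg (g • ·) (H.apply_one u)))

theorem EquivariantOn.homotopicWith_comp {V : Set Y} {f₀ f₁ : C(V, X)}
    (h : HomotopicWith f₀ f₁ (EquivariantOn G V)) {φ : C(U, V)}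
    (hφ : EquivariantOn G U (((ContinuousMap.id Y).restrict V).comp φ)) :
    HomotopicWith (f₀.comp φ) (f₁.comp φ) (EquivariantOn G U) := by
  obtain ⟨H⟩ := h
  refine ⟨⟨⟨H.toContinuousMap.comp ((ContinuousMap.id I).prodMap φ), fun u => H.apply_zero _,
    fun u => H.apply_one _⟩, fun t g u hu => ?_⟩⟩
  have hφ' : g • (φ u : Y) = φ ⟨g • (u : Z), hu⟩ := (hφ g u hu).symm
  have hmem : g • (φ u : Y) ∈ V := hφ' ▸ (φ _).2
  have hφ'' : φ ⟨g • (u : Z), hu⟩ = ⟨g • (φ u : Y), hmem⟩ := Subtype.ext hφ'.symm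
  exact (congrArg (fun v => H (t, v)) hφ'').trans (H.prop t g (φ u) hmem)

theorem EquivariantOn.homotopicWith_of_specializes {f₀ f₁ : C(U, X)} (hf₀ : EquivariantOn G U f₀)
    (hf₁ : EquivariantOn G U f₁) (h : ∀ u, f₀ u ⤳ f₁ u) :
    HomotopicWith f₀ f₁ (EquivariantOn G U) := by
  classical
  let H : I × U → X := ({1} ×ˢ univ : Set (I × U)).piecewise (f₁ ∘ Prod.snd) (f₀ ∘ Prod.snd)
  have hclosed : IsClosed ({1} ×ˢ univ : Set (I × U)) := isClosed_singleton.prod isClosed_univ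
  have hH : Continuous H := hclosed.continuous_piecewise_of_specializes
    (f₁.continuous.comp continuous_snd) (f₀.continuous.comp continuous_snd) fun p => h p.2
  refine ⟨⟨⟨⟨H, hH⟩, fun u => by simp [H], fun u => by simp [H]⟩, fun t g u hu => ?_⟩⟩
  by_cases ht : t = 1
  · simpa [H, ht] using hf₁ g u hu
  · simpa [H, ht] using hf₀ g u hu

/-- Two group elements carrying `(p, q)` to the same pair differ by an element of the common
stabilizer, hence have the same effect on a path fixed by it. -/
theorem EquivariantOn.homotopicWith_of_joinedIn [ContinuousConstSMul G X] {c₀ c₁ : C(U, X)}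
    (hc₀ : EquivariantOn G U c₀) (hc₁ : EquivariantOn G U c₁) (hlc₀ : IsLocallyConstant c₀)
    (hlc₁ : IsLocallyConstant c₁) {p q : X}
    (hpq : JoinedIn (fixedPoints ↥(stabilizer G p ⊓ stabilizer G q) X) p q)
    (horb : ∀ u, (c₀ u, c₁ u) ∈ orbit G (p, q)) :
    HomotopicWith c₀ c₁ (EquivariantOn G U) := by
  obtain ⟨γ, hγ⟩ := hpq
  choose τ hτ using horb
  have smul_path_eq {u : U} {g : G} (h : g • (p, q) = (c₀ u, c₁ u)) (t : I) :
      τ u • γ t = g • γ t := by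
    have hfix : g⁻¹ * τ u ∈ stabilizer G p ⊓ stabilizer G q := by
      have : (g⁻¹ * τ u) • (p, q) = (p, q) := by rw [mul_smul, inv_smul_eq_iff, h]; exact hτ u
      exact ⟨congrArg Prod.fst this, congrArg Prod.snd this⟩
    rw [← inv_smul_eq_iff, ← mul_smul]
    exact hγ t ⟨_, hfix⟩
  have hcont : Continuous fun z : I × U => τ z.2 • γ z.1 := by
    refine continuous_iff_continuousAt.2 fun z => ?_
    have hev : ∀ᶠ w : I × U in 𝓝 z, τ z.2 • γ w.1 = τ w.2 • γ w.1 := by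
      filter_upwards [continuous_snd.continuousAt.eventually (hlc₀.eventually_eq z.2),
        continuous_snd.continuousAt.eventually (hlc₁.eventually_eq z.2)] with w h₀ h₁
      exact (smul_path_eq ((hτ z.2).trans (Prod.ext h₀.symm h₁.symm)) w.1).symm
    exact (by fun_prop : ContinuousAt (fun w : I × U => τ z.2 • γ w.1) z).congr hev
  refine ⟨⟨⟨⟨_, hcont⟩, fun u => ?_, fun u => ?_⟩, fun t g u hu => ?_⟩⟩
  · simpa using congrArg Prod.fst (hτ u)
  · simpa using congrArg Prod.snd (hτ u)
  · have : (g * τ u) • (p, q) = (c₀ ⟨g • (u : Z), hu⟩, c₁ ⟨g • (u : Z), hu⟩) := by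
      rw [mul_smul, hc₀ g u hu, hc₁ g u hu]
      exact congrArg (g • ·) (hτ u)
    exact (smul_path_eq this t).trans (mul_smul ..)

theorem eqNavigable_of_homotopicWith {W : Set (X × X)}
    (h : HomotopicWith (ContinuousMap.fst.restrict W) (ContinuousMap.snd.restrict W)
      (EquivariantOn G W)) : EqNavigable G X W := by
  obtain ⟨H⟩ := h
  let s : C(W, C(I, X)) := (H.toContinuousMap.comp .prodSwap).curry
  exact ⟨s, s.continuous, fun w => ⟨H.apply_zero w, H.apply_one w⟩, fun g w hw t => H.prop t g w hw⟩

theorem gCategoricalAt_iff_homotopicWith {U : Set X} {x : X} :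
    GCategoricalAt G X U x ↔ ∃ c : C(U, X), (∀ u, c u ∈ orbit G x) ∧
      HomotopicWith ((ContinuousMap.id X).restrict U) c (EquivariantOn G U) := by
  constructor
  · rintro ⟨F, hF, h₀, heq, h₁⟩
    exact ⟨⟨fun u => F (u, 1), by fun_prop⟩, h₁,
      ⟨⟨⟨⟨F ∘ Prod.swap, by fun_prop⟩, h₀, fun _ => rfl⟩, fun t g u hu => heq g u hu t⟩⟩⟩
  · rintro ⟨c, hc, ⟨H⟩⟩
    exact ⟨fun z => H (z.2, z.1), by fun_prop, H.apply_zero, fun g u hu t => H.prop t g u hu,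
      fun u => by simpa only [H.apply_one] using hc u⟩

end EquivariantHomotopy

section CategoricalCovers

variable {G X : Type*} [Group G] [TopologicalSpace X] [MulAction G X]

theorem isLocallyConstant_of_forall_mem {Z : Type*} [TopologicalSpace Z] {s : Set X}
    [DiscreteTopology s] {f : Z → X} (hf : Continuous f) (h : ∀ z, f z ∈ s) :
    IsLocallyConstant f :=
  ((IsLocallyConstant.iff_continuous _).2 (hf.codRestrict h)).comp Subtype.val

/-- The part of `U × V` that `c × d` carries into the diagonal orbit of `(p, q)`. The product of two
orbits is a disjoint union of such diagonal orbits, so these sets partition `U × V` when `c` and `d`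
take values in single orbits. -/
def orbitPiece {U V : Set X} (G : Type*) [Group G] [MulAction G X] (c : C(U, X)) (d : C(V, X))
    (p q : X) : Set (X × X) :=
  {z | ∃ (hU : z.1 ∈ U) (hV : z.2 ∈ V), (c ⟨z.1, hU⟩, d ⟨z.2, hV⟩) ∈ orbit G (p, q)}

variable {U V : Set X} {c : C(U, X)} {d : C(V, X)} {p q : X}

theorem isOpen_orbitPiece (hU : IsOpen U) (hV : IsOpen V) (hc : IsLocallyConstant c)
    (hd : IsLocallyConstant d) : IsOpen (orbitPiece G c d p q) := by
  have hcd : IsLocallyConstant fun z : U × V => (c z.1, d z.2) :=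
    (hc.comp_continuous continuous_fst).prodMk (hd.comp_continuous continuous_snd)
  have himage : orbitPiece G c d p q = Prod.map Subtype.val Subtype.val ''
      ((fun z : U × V => (c z.1, d z.2)) ⁻¹' orbit G (p, q)) := by
    ext z
    constructor
    · rintro ⟨hz₁, hz₂, hz⟩
      exact ⟨(⟨z.1, hz₁⟩, ⟨z.2, hz₂⟩), hz, rfl⟩
    · rintro ⟨w, hw, rfl⟩
      exact ⟨w.1.2, w.2.2, hw⟩
  rw [himage]
  exact (hU.isOpenMap_subtype_val.prodMap hV.isOpenMap_subtype_val) _ (hcd _)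

theorem gInvariant_orbitPiece (hU : GInvariant G U) (hV : GInvariant G V)
    (hc : EquivariantOn G U c) (hd : EquivariantOn G V d) :
    GInvariant G (orbitPiece G c d p q) := by
  rintro g z ⟨hz₁, hz₂, hz⟩
  refine ⟨hU g _ hz₁, hV g _ hz₂, ?_⟩
  have hsmul : (c ⟨g • z.1, hU g _ hz₁⟩, d ⟨g • z.2, hV g _ hz₂⟩) =
      g • (c ⟨z.1, hz₁⟩, d ⟨z.2, hz₂⟩) :=
    Prod.ext (hc g ⟨z.1, hz₁⟩ _) (hd g ⟨z.2, hz₂⟩ _)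
  exact hsmul ▸ mem_orbit_of_mem_orbit g hz

/-- Deform the first coordinate to `c`, move along a path from `p` to `q`, and undo the deformation
of the second coordinate to `d`. -/
theorem eqNavigable_orbitPiece [ContinuousConstSMul G X]
    (hUc : HomotopicWith ((ContinuousMap.id X).restrict U) c (EquivariantOn G U))
    (hVd : HomotopicWith ((ContinuousMap.id X).restrict V) d (EquivariantOn G V))
    (hc : IsLocallyConstant c) (hd : IsLocallyConstant d)
    (hpq : JoinedIn (fixedPoints ↥(stabilizer G p ⊓ stabilizer G q) X) p q) :
    EqNavigable G X (orbitPiece G c d p q) := by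
  let φ : C(orbitPiece G c d p q, U) := ⟨fun z => ⟨z.1.1, z.2.1⟩, by fun_prop⟩
  let ψ : C(orbitPiece G c d p q, V) := ⟨fun z => ⟨z.1.2, z.2.2.1⟩, by fun_prop⟩
  have hfst := EquivariantOn.homotopicWith_comp hUc (φ := φ) fun _ _ _ => rfl
  have hsnd := EquivariantOn.homotopicWith_comp hVd (φ := ψ) fun _ _ _ => rfl
  have hmid : HomotopicWith (c.comp φ) (d.comp ψ) (EquivariantOn G (orbitPiece G c d p q)) :=
    EquivariantOn.homotopicWith_of_joinedIn (EquivariantOn.right_of_homotopicWith hfst)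
      (EquivariantOn.right_of_homotopicWith hsnd)
      (hc.comp_continuous φ.continuous) (hd.comp_continuous ψ.continuous) hpq fun z => z.2.2.2
  exact eqNavigable_of_homotopicWith ((hfst.trans hmid).trans hsnd.symm)

theorem eqTC_lt_top_of_eqLS_lt_top [ContinuousConstSMul G X] [∀ x : X, Finite (orbit G x)]
    [∀ x : X, DiscreteTopology (orbit G x)]
    (hconn : ∀ H : Subgroup G, ∀ p ∈ fixedPoints H X, ∀ q ∈ fixedPoints H X,
      JoinedIn (fixedPoints H X) p q)
    (hLS : eqLS G X < ⊤) : eqTC G X < ⊤ := by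
  obtain ⟨n, U, hopen, hinv, hcover, hcat⟩ := exists_categorical_cover_of_eqLS_lt_top hLS
  choose x hx using hcat
  choose c hc hUc using fun i => gCategoricalAt_iff_homotopicWith.1 (hx i)
  have hlc (i : Fin n) : IsLocallyConstant (c i) :=
    isLocallyConstant_of_forall_mem (c i).continuous (hc i)
  have hequiv (i : Fin n) : EquivariantOn G (U i) (c i) :=
    EquivariantOn.right_of_homotopicWith (hUc i)
  let W (k : Σ ij : Fin n × Fin n, orbit G (x ij.1) × orbit G (x ij.2)) : Set (X × X) :=
    orbitPiece G (c k.1.1) (c k.1.2) k.2.1 k.2.2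
  refine eqTC_lt_top_of_cover (U := W) (fun k => ?_) (fun k => ?_) ?_ fun k => ?_
  · exact isOpen_orbitPiece (hopen _) (hopen _) (hlc _) (hlc _)
  · exact gInvariant_orbitPiece (hinv _) (hinv _) (hequiv _) (hequiv _)
  · refine eq_univ_of_forall fun z => mem_iUnion.2 ?_
    obtain ⟨i, hi⟩ := mem_iUnion.1 (hcover ▸ mem_univ z.1)
    obtain ⟨j, hj⟩ := mem_iUnion.1 (hcover ▸ mem_univ z.2)
    exact ⟨⟨(i, j), ⟨_, hc i ⟨z.1, hi⟩⟩, ⟨_, hc j ⟨z.2, hj⟩⟩⟩, hi, hj, mem_orbit_self _⟩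
  · exact eqNavigable_orbitPiece (hUc _) (hUc _) (hlc _) (hlc _)
      (hconn _ _ (fun ⟨_, hg⟩ => hg.1) _ fun ⟨_, hg⟩ => hg.2)

end CategoricalCovers

section LowerSetTopology

variable {P : Type*} [TopologicalSpace P]

instance [Preorder P] [Topology.IsLowerSet P] (s : Set P) : Topology.IsLowerSet s :=
  Topology.isLowerSet_iff_nhds.2 fun a => by
    rw [nhds_subtype_eq_comap, IsLowerSet.nhds_eq_principal_Iic, Filter.comap_principal]
    rfl

theorem discreteTopology_of_isAntichain [Preorder P] [Topology.IsLowerSet P] {s : Set P}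
    (hs : IsAntichain (· ≤ ·) s) : DiscreteTopology s :=
  discreteTopology_iff_isOpen_singleton.2 fun a => by
    refine IsLowerSet.isOpen_iff_isLowerSet.2 fun b c hcb hb => ?_
    obtain rfl := hb
    exact Subtype.ext (hs.eq c.2 b.2 hcb)

end LowerSetTopology

section OrderAction

theorem isFixedPt_of_le_map_or_map_le {P : Type*} [PartialOrder P] {f : P → P} (hf : Monotone f)
    {x : P} (hx : x ∈ Function.periodicPts f) (h : x ≤ f x ∨ f x ≤ x) :
    Function.IsFixedPt f x := by
  obtain ⟨n, hn, hper⟩ := hx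
  rcases h with h | h
  · exact le_antisymm ((hf.monotone_iterate_of_le_map h hn).trans_eq hper) h
  · exact le_antisymm h (hper.ge.trans (hf.antitone_iterate_of_map_le h hn))

variable {G P : Type*} [Group G] [PartialOrder P] [Finite P] [MulAction G P]
  [CovariantClass G P HSMul.hSMul LE.le]

theorem smul_eq_self_of_comparable {g : G} {x : P} (h : x ≤ g • x ∨ g • x ≤ x) : g • x = x :=
  isFixedPt_of_le_map_or_map_le (smul_mono_right g)
    ((MulAction.injective g).mem_periodicPts x) h

variable (G) in
theorem isAntichain_orbit (x : P) : IsAntichain (· ≤ ·) (orbit G x) := by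
  rintro a ha b hb hne hab
  obtain ⟨g, rfl⟩ := orbit_eq_iff.2 ha ▸ hb
  exact hne (smul_eq_self_of_comparable (.inl hab)).symm

instance [TopologicalSpace P] [Topology.IsLowerSet P] (x : P) : DiscreteTopology (orbit G x) :=
  discreteTopology_of_isAntichain (isAntichain_orbit G x)

end OrderAction

namespace FinGPoset

variable {G : Type} [Group G] {X : FinGPoset G} {H : Subgroup G}

instance : MulAction G X.carrier := X.mulAction

instance : TopologicalSpace X.carrier := downTop X.carrier

instance : Topology.IsLowerSet X.carrier :=
  ⟨TopologicalSpace.ext_iff.2 fun _ => ⟨fun h _ _ hba ha => h ha hba, fun h _ ha _ hba => h hba ha⟩⟩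

instance : CovariantClass G X.carrier HSMul.hSMul LE.le := ⟨fun g => X.smul_mono g _ _⟩

instance : ContinuousConstSMul G X.carrier :=
  ⟨fun g => IsLowerSet.monotone_iff_continuous.1 (smul_mono_right g)⟩

theorem fixedBy_eq_fixedPoints : X.fixedBy H = fixedPoints H X.carrier :=
  Set.ext fun _ => ⟨fun h g => h g g.2, fun h g hg => h ⟨g, hg⟩⟩

theorem TCG_lt_top_of_LSG_lt_top (hconn : X.GConnected) (hLS : X.LSG < ⊤) : X.TCG < ⊤ :=
  eqTC_lt_top_of_eqLS_lt_top (fun H => fixedBy_eq_fixedPoints (H := H) ▸ hconn H) hLS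

theorem GConnected.isPreconnected_fixedBy (hconn : X.GConnected) (H : Subgroup G) :
    IsPreconnected (X.fixedBy H) := by
  refine isPreconnected_of_forall_pair fun a ha b hb => ?_
  obtain ⟨γ, hγ⟩ := hconn H a ha b hb
  exact ⟨range γ, range_subset_iff.2 hγ, ⟨0, γ.source⟩, ⟨1, γ.target⟩,
    isPreconnected_range γ.continuous⟩

section Chains

noncomputable instance : SetLike X.sd.carrier X.carrier where
  coe c := c.val
  coe_injective _ _ h := Subtype.ext (Finset.coe_injective h)

instance : IsConcreteLE X.sd.carrier X.carrier := ⟨Iff.rfl⟩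

variable {c : X.sd.carrier} {e e' : X.carrier} {g : G}

theorem le_or_le_of_mem (he : e ∈ c) (he' : e' ∈ c) : e ≤ e' ∨ e' ≤ e :=
  c.prop.2 e he e' he'

theorem exists_isLeast (c : X.sd.carrier) : ∃ e, IsLeast (c : Set X.carrier) e := by
  obtain ⟨e, he⟩ := (c : Set X.carrier).toFinite.exists_minimal c.prop.1
  exact ⟨e, he.1, fun a ha => (le_or_le_of_mem he.1 ha).elim id (he.2 ha)⟩

theorem mem_smul_sd : e ∈ g • c ↔ ∃ a ∈ c, g • a = e := by
  classical exact Finset.mem_image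

theorem smul_mem_smul_sd (he : e ∈ c) : g • e ∈ g • c :=
  mem_smul_sd.2 ⟨e, he, rfl⟩

theorem smul_sd_eq_self_iff : g • c = c ↔ ∀ e ∈ c, g • e = e := by
  refine ⟨fun h e he => ?_, fun h => ?_⟩
  · exact smul_eq_self_of_comparable (le_or_le_of_mem he (h ▸ smul_mem_smul_sd he))
  · refine SetLike.ext fun e => ?_
    refine mem_smul_sd.trans ⟨?_, fun he => ⟨e, he, h e he⟩⟩
    rintro ⟨a, ha, rfl⟩
    rwa [h a ha]

theorem mem_fixedBy_sd : c ∈ X.sd.fixedBy H ↔ ∀ e ∈ c, e ∈ X.fixedBy H :=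
  ⟨fun h e he g hg => smul_sd_eq_self_iff.1 (h g hg) e he,
    fun h g hg => smul_sd_eq_self_iff.2 fun e he => h e he g hg⟩

theorem antitone_stabilizer_sd : Antitone fun c : X.sd.carrier => stabilizer G c :=
  fun _ _ hcd _ hg => smul_sd_eq_self_iff.2 fun e he => smul_sd_eq_self_iff.1 hg e (hcd he)

/-- A point of a poset, regarded as a vertex of the barycentric subdivision. -/
def vertex (e : X.carrier) : X.sd.carrier :=
  ⟨{e}, by simp⟩

theorem mem_vertex : e' ∈ vertex e ↔ e' = e :=
  Finset.mem_singleton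

theorem vertex_le_iff : vertex e ≤ c ↔ e ∈ c :=
  Finset.singleton_subset_iff

theorem smul_vertex : g • vertex e = vertex (g • e) := by
  refine SetLike.ext fun a => ?_
  simp [mem_smul_sd, mem_vertex, eq_comm]

open Classical in
/-- The chain obtained from `c` by adjoining a lower bound `e`: in the subdivision this is the
barycentre of the cone over `c` with apex `e`. -/
noncomputable def insertBelow (e : X.carrier) (c : X.sd.carrier)
    (he : e ∈ lowerBounds (c : Set X.carrier)) : X.sd.carrier :=
  ⟨insert e c.val, Finset.insert_nonempty _ _, by
    simp only [Finset.mem_insert]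
    rintro a (rfl | ha) b (rfl | hb)
    exacts [.inl le_rfl, .inl (he hb), .inr (he ha), c.prop.2 a ha b hb]⟩

theorem mem_insertBelow {he : e ∈ lowerBounds (c : Set X.carrier)} :
    e' ∈ insertBelow e c he ↔ e' = e ∨ e' ∈ c := by
  classical exact Finset.mem_insert

theorem le_insertBelow (he : e ∈ lowerBounds (c : Set X.carrier)) : c ≤ insertBelow e c he :=
  fun _ ha => mem_insertBelow.2 (.inr ha)

theorem vertex_le_insertBelow (he : e ∈ lowerBounds (c : Set X.carrier)) :
    vertex e ≤ insertBelow e c he :=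
  vertex_le_iff.2 (mem_insertBelow.2 (.inl rfl))

theorem insertBelow_le_insertBelow {d : X.sd.carrier} (hee' : e = e') (hcd : c ≤ d)
    (he : e ∈ lowerBounds (c : Set X.carrier)) (he' : e' ∈ lowerBounds (d : Set X.carrier)) :
    insertBelow e c he ≤ insertBelow e' d he' :=
  fun _ ha => mem_insertBelow.2 ((mem_insertBelow.1 ha).imp (·.trans hee') (hcd ·))

theorem insertBelow_smul (hee' : e' = g • e) (he : e ∈ lowerBounds (c : Set X.carrier))
    (he' : e' ∈ lowerBounds ((g • c : X.sd.carrier) : Set X.carrier)) :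
    insertBelow e' (g • c) he' = g • insertBelow e c he := by
  refine SetLike.ext fun a => ?_
  simp [mem_insertBelow, mem_smul_sd, hee', or_and_right, exists_or, eq_comm]

end Chains

section Connectedness

variable {c : X.sd.carrier} {s t : X.carrier}

theorem joinedIn_sd_vertex_of_mem (hc : c ∈ X.sd.fixedBy H) (ht : t ∈ c) :
    JoinedIn (X.sd.fixedBy H) (vertex t) c := by
  have hle : vertex t ≤ c := vertex_le_iff.2 ht
  have hvertex : vertex t ∈ X.sd.fixedBy H :=
    mem_fixedBy_sd.2 fun a ha => mem_fixedBy_sd.1 hc a (hle ha)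
  exact (IsLowerSet.specializes_iff_le.2 hle).joinedIn hvertex hc

theorem joinedIn_sd_vertex_of_le (hs : s ∈ X.fixedBy H) (ht : t ∈ X.fixedBy H) (h : s ≤ t) :
    JoinedIn (X.sd.fixedBy H) (vertex s) (vertex t) := by
  have hlower : s ∈ lowerBounds (vertex t : Set X.carrier) :=
    fun a ha => h.trans_eq (mem_vertex.1 ha).symm
  have hedge : insertBelow s (vertex t) hlower ∈ X.sd.fixedBy H := mem_fixedBy_sd.2 fun a ha => by
    rcases mem_insertBelow.1 ha with rfl | ha
    exacts [hs, mem_vertex.1 ha ▸ ht]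
  exact (joinedIn_sd_vertex_of_mem hedge (vertex_le_iff.1 (vertex_le_insertBelow hlower))).trans
    (joinedIn_sd_vertex_of_mem hedge (vertex_le_iff.1 (le_insertBelow hlower))).symm

theorem GConnected.sd (hconn : X.GConnected) : X.sd.GConnected := by
  intro H c hc d hd
  obtain ⟨s, hs⟩ := c.prop.1
  obtain ⟨t, ht⟩ := d.prop.1
  have hst : JoinedIn (X.sd.fixedBy H) (vertex s) (vertex t) :=
    (hconn.isPreconnected_fixedBy H).induction₂
      (fun a b => JoinedIn (X.sd.fixedBy H) (vertex a) (vertex b))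
      (fun a ha => by
        have hIic : Iic a ∈ 𝓝 a := by rw [IsLowerSet.nhds_eq_principal_Iic]; exact Subset.rfl
        filter_upwards [self_mem_nhdsWithin, mem_nhdsWithin_of_mem_nhds hIic] with b hb hba
        exact (joinedIn_sd_vertex_of_le hb ha hba).symm)
      (fun _ _ _ _ _ _ => JoinedIn.trans) (fun _ _ _ _ => JoinedIn.symm)
      (mem_fixedBy_sd.1 hc s hs) (mem_fixedBy_sd.1 hd t ht)
  exact (joinedIn_sd_vertex_of_mem hc hs).symm.trans
    (hst.trans (joinedIn_sd_vertex_of_mem hd ht))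

theorem GConnected.sdIter (hconn : X.GConnected) (n : ℕ) : (X.sdIter n).GConnected := by
  induction n with
  | zero => exact hconn
  | succ n ih => exact ih.sd

end Connectedness

section Category

/-- The deformation follows the fence `a ≤ {r a} ∪ a ≥ {r a}`. -/
theorem gCategoricalAt_vertex_of_lowerBound {U : Set X.sd.carrier} {r : U → X.carrier}
    (hequiv : ∀ (g : G) (a : U) (ha : g • (a : X.sd.carrier) ∈ U), r ⟨g • ↑a, ha⟩ = g • r a)
    (hconst : ∀ ⦃a b : U⦄, a ≤ b → r a = r b)
    (hlower : ∀ a : U, r a ∈ lowerBounds ((a : X.sd.carrier) : Set X.carrier))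
    {z : X.carrier} (horb : ∀ a, r a ∈ orbit G z) :
    GCategoricalAt G X.sd.carrier U (vertex z) := by
  let incl : C(U, X.sd.carrier) := (ContinuousMap.id X.sd.carrier).restrict U
  let cone : C(U, X.sd.carrier) := ⟨fun a => insertBelow (r a) a (hlower a),
    IsLowerSet.monotone_iff_continuous.1 fun a b hab =>
      insertBelow_le_insertBelow (hconst hab) hab (hlower a) (hlower b)⟩
  let apex : C(U, X.sd.carrier) := ⟨fun a => vertex (r a),
    IsLowerSet.monotone_iff_continuous.1 fun _ _ hab => (congrArg vertex (hconst hab)).le⟩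
  have hincl : EquivariantOn G U incl := fun _ _ _ => rfl
  have hcone : EquivariantOn G U cone := fun g a ha =>
    insertBelow_smul (hequiv g a ha) (hlower a) (hlower ⟨g • ↑a, ha⟩)
  have hapex : EquivariantOn G U apex := fun g a ha =>
    (congrArg vertex (hequiv g a ha)).trans smul_vertex.symm
  have hincl_cone : HomotopicWith incl cone (EquivariantOn G U) :=
    hincl.homotopicWith_of_specializes hcone fun a =>
      IsLowerSet.specializes_iff_le.2 (le_insertBelow (hlower a))
  have hapex_cone : HomotopicWith apex cone (EquivariantOn G U) :=
    hapex.homotopicWith_of_specializes hcone fun a =>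
      IsLowerSet.specializes_iff_le.2 (vertex_le_insertBelow (hlower a))
  refine gCategoricalAt_iff_homotopicWith.2 ⟨apex, fun a => ?_, hincl_cone.trans hapex_cone.symm⟩
  obtain ⟨g, hg⟩ := horb a
  exact ⟨g, smul_vertex.trans (congrArg vertex hg)⟩

variable (hX : Antitone fun e : X.carrier => stabilizer G e)
include hX

/-- Both `g` and `g'` carry some member of `x` to the same member of `a`. The two members of `x` are
comparable, hence agree, so `g'⁻¹ * g` fixes this member and everything below it. -/
theorem smul_eq_smul_of_le_smul_of_mem_lowerBounds {x a : X.sd.carrier} {z : X.carrier}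
    (hz : z ∈ lowerBounds (x : Set X.carrier)) {g g' : G} (hg : a ≤ g • x) (hg' : a ≤ g' • x) :
    g • z = g' • z := by
  obtain ⟨e, he⟩ := a.prop.1
  obtain ⟨u, hu, hgu⟩ := mem_smul_sd.1 (hg he)
  obtain ⟨v, hv, hgv⟩ := mem_smul_sd.1 (hg' he)
  have huv : (g'⁻¹ * g) • u = v := by rw [mul_smul, hgu, inv_smul_eq_iff, hgv]
  have hfix : g'⁻¹ * g ∈ stabilizer G u :=
    smul_eq_self_of_comparable (huv.symm ▸ le_or_le_of_mem hu hv)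
  have hfixz : (g'⁻¹ * g) • z = z := hX (hz hu) hfix
  rwa [mul_smul, inv_smul_eq_iff] at hfixz

theorem gCategorical_iUnion_Iic_smul (x : X.sd.carrier) :
    GCategorical G X.sd.carrier (⋃ g : G, Iic (g • x)) := by
  obtain ⟨z, hz⟩ := exists_isLeast x
  choose τ hτ using fun a : ⋃ g : G, Iic (g • x) => mem_iUnion.1 a.2
  have smul_eq {a g} (h : a.1 ≤ g • x) : τ a • z = g • z :=
    smul_eq_smul_of_le_smul_of_mem_lowerBounds hX hz.2 (hτ a) h
  refine ⟨vertex z, gCategoricalAt_vertex_of_lowerBound (r := fun a => τ a • z) ?_ ?_ ?_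
    fun a => ⟨τ a, rfl⟩⟩
  · intro g a ha
    exact (smul_eq ((smul_mono_right g (hτ a)).trans_eq (smul_smul ..))).trans (mul_smul ..)
  · exact fun a b hab => smul_eq (le_trans hab (hτ b))
  · intro a e he
    obtain ⟨u, hu, rfl⟩ := mem_smul_sd.1 (hτ a he)
    exact smul_mono_right _ (hz.2 hu)

theorem LSG_sd_lt_top : X.sd.LSG < ⊤ := by
  refine eqLS_lt_top_of_cover (U := fun x : X.sd.carrier => ⋃ g : G, Iic (g • x))
    (fun x => ?_) (fun x => ?_) ?_ (gCategorical_iUnion_Iic_smul hX)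
  · exact IsLowerSet.isOpen_iff_isLowerSet.2 (isLowerSet_iUnion fun _ => isLowerSet_Iic _)
  · rintro g a ha
    obtain ⟨g', ha⟩ := mem_iUnion.1 ha
    exact mem_iUnion.2 ⟨g * g', (smul_mono_right g (mem_Iic.1 ha)).trans_eq (smul_smul ..)⟩
  · refine eq_univ_of_forall fun a => mem_iUnion₂.2 ⟨a, 1, ?_⟩
    exact (one_smul G a).ge

end Category

end FinGPoset

theorem TCG_sdIter_lt_top_general {G : Type} [Group G] (X : FinGPoset G) (hconn : X.GConnected)
    {n : ℕ} (hn : 2 ≤ n) : (FinGPoset.sdIter n X).TCG < ⊤ := by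
  obtain ⟨m, rfl⟩ := Nat.exists_eq_add_of_le' hn
  have hLS : ((FinGPoset.sdIter m X).sd.sd).LSG < ⊤ :=
    FinGPoset.LSG_sd_lt_top FinGPoset.antitone_stabilizer_sd
  exact FinGPoset.TCG_lt_top_of_LSG_lt_top (hconn.sdIter (m + 2)) hLS

/-- Let `G` be a finite group and `X` a finite `T₀` `G`-space (encoded as a
finite `G`-poset via the specialization order) which is `G`-connected. Then for every
`n ≥ 2`, the equivariant topological complexity of the `n`-fold barycentric subdivision
`sd^n(X)` is finite. -/
theorem TCG_sdIter_lt_top (G : Type) [Group G] [Finite G] (X : FinGPoset G)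
    (hconn : X.GConnected) (n : ℕ) (hn : 2 ≤ n) :
    (FinGPoset.sdIter n X).TCG < ⊤ :=
  TCG_sdIter_lt_top_general X hconn hn
end

section
/- Let G be a finite group and K an ordered G-simplicial complex. Then TC_G(|K|) ≤ SC_G(K), i.e. the equivariant topological complexity of the geometric realization of K is at most the equivariant simplicial complexity of K. -/
/-! ### Module C: ordered G-simplicial complexes and their geometric realizations -/

/-- An ordered `G`-simplicial complex: a finite abstract simplicial complex whose vertex set
carries a partial order in which every simplex is totally ordered, together with an action of
`G` on the vertices by monotone simplicial maps. -/
structure GOSC (G : Type) [Group G] : Type 1 where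
  /-- the vertex set -/
  V : Type
  [fin : Fintype V]
  [dec : DecidableEq V]
  [po : PartialOrder V]
  /-- the set of simplices -/
  faces : Set (Finset V)
  singleton_mem : ∀ v : V, {v} ∈ faces
  nonempty_of_mem : ∀ s ∈ faces, s.Nonempty
  down_closed : ∀ s ∈ faces, ∀ t ⊆ s, t.Nonempty → t ∈ faces
  face_chain : ∀ s ∈ faces, ∀ x ∈ s, ∀ y ∈ s, x ≤ y ∨ y ≤ x
  /-- the action of `G` on vertices -/
  smul : G → V → V
  smul_one : ∀ v, smul 1 v = v
  smul_mul : ∀ g h v, smul (g * h) v = smul g (smul h v)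
  smul_mono : ∀ g : G, ∀ x y : V, x ≤ y → smul g x ≤ smul g y
  smul_faces : ∀ g : G, ∀ s ∈ faces, s.image (smul g) ∈ faces

attribute [instance] GOSC.fin GOSC.dec GOSC.po

namespace GOSC

variable {G : Type} [Group G]

/-- The underlying set of the geometric realization `|K|`: formal convex combinations of
vertices whose support is a simplex of `K`. -/
def realSet (K : GOSC G) : Set (K.V → ℝ) :=
  {f | (∀ v, 0 ≤ f v) ∧ (∑ v, f v) = 1 ∧ ∃ s ∈ K.faces, ∀ v, f v ≠ 0 → v ∈ s}

/-- The geometric realization `|K|` of an ordered `G`-simplicial complex, topologized as a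
subspace of Euclidean space `K.V → ℝ`. -/
def Real (K : GOSC G) : Type := {f : K.V → ℝ // f ∈ K.realSet}

instance (K : GOSC G) : TopologicalSpace K.Real :=
  inferInstanceAs (TopologicalSpace {f : K.V → ℝ // f ∈ K.realSet})

/-- Each `g : G` acts on `K.V` by an order isomorphism. -/
def permOf (K : GOSC G) (g : G) : Equiv K.V K.V where
  toFun := K.smul g
  invFun := K.smul g⁻¹
  left_inv := fun v => by
    rw [← K.smul_mul, inv_mul_cancel, K.smul_one]
  right_inv := fun v => by
    rw [← K.smul_mul, mul_inv_cancel, K.smul_one]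

/-- The action of `G` on the geometric realization, by affine extension:
`(g • f) v = f (g⁻¹ • v)`. -/
instance (K : GOSC G) : SMul G K.Real where
  smul g f := ⟨fun v => f.val (K.smul g⁻¹ v), by
    obtain ⟨hnn, hsum, s, hs, hsupp⟩ := f.prop
    refine ⟨fun v => hnn _, ?_, s.image (K.smul g), K.smul_faces g s hs, ?_⟩
    · rw [show (∑ v, f.val (K.smul g⁻¹ v)) = ∑ v, f.val (K.permOf g⁻¹ v) from rfl,
        Equiv.sum_comp (K.permOf g⁻¹) f.val]
      exact hsum
    · intro v hv
      have : K.smul g⁻¹ v ∈ s := hsupp _ hv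
      refine Finset.mem_image.mpr ⟨K.smul g⁻¹ v, this, ?_⟩
      rw [← K.smul_mul, mul_inv_cancel, K.smul_one]⟩

lemma smul_apply (K : GOSC G) (g : G) (f : K.Real) (v : K.V) :
    (g • f).val v = f.val (K.smul g⁻¹ v) := rfl

instance (K : GOSC G) : MulAction G K.Real where
  one_smul f := by
    apply Subtype.ext
    funext v
    rw [smul_apply, inv_one, K.smul_one]
  mul_smul g h f := by
    apply Subtype.ext
    funext v
    rw [smul_apply, smul_apply, smul_apply, mul_inv_rev, K.smul_mul]

end GOSC
namespace GOSC

variable {G : Type} [Group G]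

/-- The product of two ordered `G`-simplicial complexes: vertices are pairs with the product
order, simplices are the nonempty chains both of whose projections are simplices, and `G`
acts diagonally. -/
noncomputable def prod (K L : GOSC G) : GOSC G :=
  letI : DecidableEq (K.V × L.V) := Classical.decEq _
  { V := K.V × L.V
    faces := {s | s.Nonempty ∧ (∀ x ∈ s, ∀ y ∈ s, x ≤ y ∨ y ≤ x) ∧
      s.image Prod.fst ∈ K.faces ∧ s.image Prod.snd ∈ L.faces}
    singleton_mem := fun v => ⟨Finset.singleton_nonempty v, by
        intro x hx y hy
        rw [Finset.mem_singleton] at hx hy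
        subst hx; subst hy; exact Or.inl le_rfl,
      by rw [Finset.image_singleton]; exact K.singleton_mem v.1,
      by rw [Finset.image_singleton]; exact L.singleton_mem v.2⟩
    nonempty_of_mem := fun s hs => hs.1
    down_closed := fun s hs t hts htne =>
      ⟨htne, fun x hx y hy => hs.2.1 x (hts hx) y (hts hy),
        K.down_closed _ hs.2.2.1 _ (Finset.image_subset_image hts) (htne.image _),
        L.down_closed _ hs.2.2.2 _ (Finset.image_subset_image hts) (htne.image _)⟩
    face_chain := fun s hs => hs.2.1
    smul := fun g p => (K.smul g p.1, L.smul g p.2)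
    smul_one := fun p => by show (K.smul 1 p.1, L.smul 1 p.2) = p; rw [K.smul_one, L.smul_one]
    smul_mul := fun g h p => by
      show (K.smul (g * h) p.1, L.smul (g * h) p.2) = _
      rw [K.smul_mul, L.smul_mul]
    smul_mono := fun g x y hxy => ⟨K.smul_mono g _ _ hxy.1, L.smul_mono g _ _ hxy.2⟩
    smul_faces := fun g s hs => by
      refine ⟨hs.1.image _, ?_, ?_, ?_⟩
      · intro x hx y hy
        rcases Finset.mem_image.mp hx with ⟨a, ha, rfl⟩
        rcases Finset.mem_image.mp hy with ⟨b, hb, rfl⟩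
        rcases hs.2.1 a ha b hb with h | h
        · exact Or.inl ⟨K.smul_mono g _ _ h.1, L.smul_mono g _ _ h.2⟩
        · exact Or.inr ⟨K.smul_mono g _ _ h.1, L.smul_mono g _ _ h.2⟩
      · rw [Finset.image_image,
          show (Prod.fst ∘ fun p : K.V × L.V => (K.smul g p.1, L.smul g p.2)) =
            K.smul g ∘ Prod.fst from rfl, ← Finset.image_image]
        exact K.smul_faces g _ hs.2.2.1
      · rw [Finset.image_image,
          show (Prod.snd ∘ fun p : K.V × L.V => (K.smul g p.1, L.smul g p.2)) =
            L.smul g ∘ Prod.snd from rfl, ← Finset.image_image]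
        exact L.smul_faces g _ hs.2.2.2 }

/-- The barycentric subdivision of an ordered `G`-simplicial complex: vertices are the
simplices of `K` ordered by inclusion, simplices are the nonempty chains of simplices,
with the induced `G`-action. -/
noncomputable def sd (K : GOSC G) : GOSC G :=
  letI : DecidablePred (· ∈ K.faces) := Classical.decPred _
  letI : DecidableEq {s : Finset K.V // s ∈ K.faces} := Classical.decEq _
  letI : Fintype {s : Finset K.V // s ∈ K.faces} := Subtype.fintype _
  { V := {s : Finset K.V // s ∈ K.faces}
    faces := {σ | σ.Nonempty ∧ ∀ a ∈ σ, ∀ b ∈ σ, a ≤ b ∨ b ≤ a}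
    singleton_mem := fun v => ⟨Finset.singleton_nonempty v, by
      intro a ha b hb
      rw [Finset.mem_singleton] at ha hb
      subst ha; subst hb; exact Or.inl le_rfl⟩
    nonempty_of_mem := fun σ hσ => hσ.1
    down_closed := fun σ hσ τ hτσ hτne => ⟨hτne, fun a ha b hb => hσ.2 a (hτσ ha) b (hτσ hb)⟩
    face_chain := fun σ hσ => hσ.2
    smul := fun g s => ⟨s.val.image (K.smul g), K.smul_faces g s.val s.prop⟩
    smul_one := fun s => by
      apply Subtype.ext
      show s.val.image (K.smul 1) = s.val
      rw [Finset.image_congr (g := id) (fun x _ => K.smul_one x), Finset.image_id]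
    smul_mul := fun g h s => by
      apply Subtype.ext
      show s.val.image (K.smul (g * h)) = (s.val.image (K.smul h)).image (K.smul g)
      rw [Finset.image_image]
      exact Finset.image_congr (fun x _ => K.smul_mul g h x)
    smul_mono := fun g s t hst => by
      show s.val.image (K.smul g) ≤ t.val.image (K.smul g)
      exact Finset.image_subset_image hst
    smul_faces := fun g σ hσ => by
      refine ⟨hσ.1.image _, ?_⟩
      intro a ha b hb
      rcases Finset.mem_image.mp ha with ⟨a', ha', rfl⟩
      rcases Finset.mem_image.mp hb with ⟨b', hb', rfl⟩
      rcases hσ.2 a' ha' b' hb' with h | h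
      · exact Or.inl (Finset.image_subset_image h)
      · exact Or.inr (Finset.image_subset_image h) }

/-- Iterated barycentric subdivision of an ordered `G`-simplicial complex. -/
noncomputable def sdIter : ℕ → GOSC G → GOSC G
  | 0, K => K
  | (n + 1), K => (sdIter n K).sd

/-- Every simplex of an ordered simplicial complex has a greatest vertex. -/
lemma exists_greatest (K : GOSC G) (s : Finset K.V) (hs : s ∈ K.faces) :
    ∃ m ∈ s, ∀ x ∈ s, x ≤ m := by
  obtain ⟨m, hm, hmax⟩ := Finset.exists_maximal (K.nonempty_of_mem s hs)
  refine ⟨m, hm, fun x hx => ?_⟩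
  rcases K.face_chain s hs x hx m hm with h | h
  · exact h
  · rcases eq_or_lt_of_le h with e | lt
    · exact le_of_eq e.symm
    · exact hmax hx h

/-- The last-vertex map `τ : sd(K) → K`, the chosen equivariant simplicial approximation of
the identity: it sends a simplex of `K` (a vertex of `sd(K)`) to its greatest vertex. -/
noncomputable def tau (K : GOSC G) : (sd K).V → K.V := fun s =>
  Classical.choose (K.exists_greatest s.val s.prop)

/-- The iterated last-vertex map `sd^n(M) → M`, the chosen equivariant simplicial
approximation of the identity. -/
noncomputable def tauIter : (n : ℕ) → (M : GOSC G) → (sdIter n M).V → M.V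
  | 0, _ => id
  | (n + 1), M => (tauIter n M) ∘ (tau (sdIter n M))

/-- The two vertex maps `π₁, π₂ : M → K` are equivariantly `c`-contiguous on the invariant
subcomplex determined by the down-closed set of simplices `Λ`: there is a chain of `c + 1`
equivariant simplicial maps from `π₁` to `π₂` in which consecutive maps are contiguous. -/
def ContigOn (M K : GOSC G) (π₁ π₂ : M.V → K.V) (Λ : Set (Finset M.V)) (c : ℕ) : Prop :=
  ∃ φ : Fin (c + 1) → M.V → K.V,
    (∀ s ∈ Λ, ∀ v ∈ s, φ 0 v = π₁ v) ∧
    (∀ s ∈ Λ, ∀ v ∈ s, φ (Fin.last c) v = π₂ v) ∧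
    (∀ j, ∀ s ∈ Λ, s.image (φ j) ∈ K.faces) ∧
    (∀ j, ∀ g : G, ∀ s ∈ Λ, ∀ v ∈ s, φ j (M.smul g v) = K.smul g (φ j v)) ∧
    (∀ j : Fin c, ∀ s ∈ Λ, (s.image (φ j.castSucc) ∪ s.image (φ j.succ)) ∈ K.faces)

/-- `SC_G^{b,c}(K)`: the least `n` such that `sd^b(K × K)` can be covered by `n` invariant
subcomplexes, on each of which the two composites of the iterated (last-vertex) equivariant
approximations of the identity `sd^b(K×K) → K×K` with the two projections `K×K → K` are
equivariantly `c`-contiguous; `⊤` if there is no such cover. -/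
noncomputable def SCbc (K : GOSC G) (b c : ℕ) : ℕ∞ :=
  sInf {k : ℕ∞ | ∃ n : ℕ, k = n ∧
    ∃ Λ : Fin n → Set (Finset (sdIter b (K.prod K)).V),
      (∀ i, Λ i ⊆ (sdIter b (K.prod K)).faces) ∧
      (∀ i, ∀ s ∈ Λ i, ∀ t ⊆ s, t.Nonempty → t ∈ Λ i) ∧
      (∀ i, ∀ g : G, ∀ s ∈ Λ i, s.image ((sdIter b (K.prod K)).smul g) ∈ Λ i) ∧
      ((sdIter b (K.prod K)).faces ⊆ ⋃ i, Λ i) ∧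
      ∀ i, ContigOn (sdIter b (K.prod K)) K
        (fun v => (tauIter b (K.prod K) v).1)
        (fun v => (tauIter b (K.prod K) v).2)
        (Λ i) c}

/-- The equivariant simplicial complexity `SC_G(K) = min_{b,c} SC_G^{b,c}(K)`. -/
noncomputable def SCG (K : GOSC G) : ℕ∞ :=
  ⨅ b : ℕ, ⨅ c : ℕ, SCbc K b c

end GOSC
/-!
Let `M = sdᵇ(K × K)`, let `τ : sd M → M` be the last-vertex map, and identify `|K| × |K|` with
`|M| = |sd M|`. For an invariant subcomplex `Λ` of `M`, the points with a nonzero coordinate at some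
vertex `s ∈ Λ` of `sd M` form an open invariant set `N`, and these sets cover when the subcomplexes
do. A simplicial map `φ : Λ → K` extends to `N`: forget the coordinates at simplices outside `Λ`,
push the others forward along `φ ∘ τ`, and normalise. Contiguous maps have extensions that are
straight-line homotopic. So are the extension of the first map of a contiguity chain and the first
projection, and likewise at the other end, because a vertex of `M` with nonzero coordinate at a
point of `|K| × |K|` goes to vertices of `K` with nonzero coordinates at the two components.

Coordinates are weights in `ℝ≥0`, not normalised until the end: each step up to the normalisation is
then a formula in lattice operations, sums and truncated subtraction, visibly continuous and
equivariant.
-/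

section EquivariantMaps

variable (G : Type*) {X Y Z W : Type*}

/-- Maps commuting with the action of `G`. An unbundled predicate, so that it can serve as the
condition on the stages of a `ContinuousMap.HomotopyWith`. -/
def IsEquivariant [SMul G Y] [SMul G X] (f : Y → X) : Prop :=
  ∀ (g : G) (y : Y), f (g • y) = g • f y

variable {G}

lemma IsEquivariant.comp [SMul G X] [SMul G Y] [SMul G Z] {f : Y → X} {h : Z → Y}
    (hf : IsEquivariant G f) (hh : IsEquivariant G h) : IsEquivariant G (f ∘ h) := fun g z => by
  simp only [Function.comp_apply, hh g z, hf g (h z)]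

lemma IsEquivariant.prodMap [SMul G X] [SMul G Y] [SMul G Z] [SMul G W] {f : X → Y} {h : Z → W}
    (hf : IsEquivariant G f) (hh : IsEquivariant G h) : IsEquivariant G (Prod.map f h) :=
  fun g z => Prod.ext (hf g z.1) (hh g z.2)

/-- The preimage of an invariant set under an equivariant map. -/
def IsEquivariant.preimage [SMul G X] [SMul G Y] {f : Y → X} (S : SubMulAction G X)
    (hf : IsEquivariant G f) : SubMulAction G Y where
  carrier := f ⁻¹' S
  smul_mem' g y hy := by
    rw [Set.mem_preimage, hf g y]
    exact S.smul_mem g hy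

lemma eqNavigable_of_homotopicWith_s3 [Group G] [TopologicalSpace X] [MulAction G X]
    {U : SubMulAction G (X × X)} {p q : C(U, X)} (hp : ∀ u, p u = u.1.1) (hq : ∀ u, q u = u.1.2)
    (h : p.HomotopicWith q (IsEquivariant G ·)) : EqNavigable G X (U : Set (X × X)) := by
  obtain ⟨H⟩ := h
  refine ⟨fun u => (H.toContinuousMap.comp ContinuousMap.prodSwap).curry u,
    ContinuousMap.continuous _, fun u => ⟨?_, ?_⟩, fun g u _ t => H.prop t g u⟩
  · exact (H.apply_zero u).trans (hp u)
  · exact (H.apply_one u).trans (hq u)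

end EquivariantMaps

namespace GOSC

open Set Function
open scoped NNReal

attribute [local instance] arrowAction

lemma smul_apply_smul {G V A : Type*} [Group G] [MulAction G V] (g : G) (x : V → A) (v : V) :
    (g • x) (g • v) = x v :=
  congrArg x (inv_smul_smul g v)

section Weights

variable {G V W : Type*} [Fintype V]

/-- The support of a weight function as a finite set: the simplex carrying the point with these
homogeneous coordinates. -/
noncomputable def supp (x : V → ℝ≥0) : Finset V := {v | x v ≠ 0}

lemma mem_supp {x : V → ℝ≥0} {v : V} : v ∈ supp x ↔ x v ≠ 0 :=
  Finset.mem_filter_univ v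

lemma supp_nonempty {x : V → ℝ≥0} (hx : x ≠ 0) : (supp x).Nonempty :=
  (ne_iff.1 hx).imp fun _ => mem_supp.2

/-- The total weight carried by `A`, for a weight function `x` on a finite set. -/
noncomputable def mass (x : V → ℝ≥0) (A : Set V) : ℝ≥0 := ∑ v, A.indicator x v

lemma mass_univ (x : V → ℝ≥0) : mass x univ = ∑ v, x v := by
  simp only [mass, indicator_univ]

lemma mass_eq_zero_iff {x : V → ℝ≥0} {A : Set V} : mass x A = 0 ↔ ∀ v ∈ A, x v = 0 := by
  simp only [mass, Finset.sum_eq_zero_iff, Finset.mem_univ, forall_const, indicator_apply_eq_zero]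

lemma mass_univ_ne_zero {x : V → ℝ≥0} (hx : x ≠ 0) : mass x univ ≠ 0 := fun h =>
  hx (funext fun v => mass_eq_zero_iff.1 h v (mem_univ v))

lemma mass_mono (x : V → ℝ≥0) {A B : Set V} (h : A ⊆ B) : mass x A ≤ mass x B :=
  Finset.sum_le_sum fun v _ => indicator_le_indicator_of_subset h (fun _ => zero_le) v

lemma continuous_mass (A : Set V) : Continuous fun x : V → ℝ≥0 => mass x A := by
  classical
  simp only [mass, indicator_apply]
  refine continuous_finsetSum _ fun v _ => ?_
  split_ifs <;> fun_prop

lemma mass_smul [Group G] [MulAction G V] (g : G) (x : V → ℝ≥0) (A : Set V) :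
    mass (g • x) A = mass x ((g • ·) ⁻¹' A) := by
  classical
  simp only [mass, ← Equiv.sum_comp (MulAction.toPerm g) (A.indicator (g • x))]
  refine Finset.sum_congr rfl fun v _ => ?_
  simp only [MulAction.toPerm_apply, indicator_apply, smul_apply_smul, mem_preimage]

section Pushforward

/-- The image of the part of a weight function lying over `A` under `φ`, with the weights of each
fibre added up. -/
noncomputable def pushforward (A : Set V) (φ : V → W) (x : V → ℝ≥0) : W → ℝ≥0 :=
  fun w => mass x (A ∩ φ ⁻¹' {w})

lemma pushforward_ne_zero_iff {A : Set V} {φ : V → W} {x : V → ℝ≥0} {w : W} :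
    pushforward A φ x w ≠ 0 ↔ ∃ v ∈ A, φ v = w ∧ x v ≠ 0 := by
  simp only [pushforward, ne_eq, mass_eq_zero_iff, mem_inter_iff, mem_preimage,
    mem_singleton_iff, not_forall, exists_prop, and_assoc]

lemma continuous_pushforward (A : Set V) (φ : V → W) : Continuous (pushforward A φ) :=
  continuous_pi fun _ => continuous_mass _

lemma pushforward_smul [Group G] [MulAction G V] [MulAction G W] {A : Set V} {φ : V → W}
    (hA : ∀ g : G, ∀ v ∈ A, g • v ∈ A) (hφ : ∀ g : G, ∀ v ∈ A, φ (g • v) = g • φ v) (g : G)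
    (x : V → ℝ≥0) : pushforward A φ (g • x) = g • pushforward A φ x := by
  funext w
  have hpre : (g • ·) ⁻¹' (A ∩ φ ⁻¹' {w}) = A ∩ φ ⁻¹' {g⁻¹ • w} := by
    ext v
    have hmem : g • v ∈ A ↔ v ∈ A := ⟨fun h => inv_smul_smul g v ▸ hA g⁻¹ _ h, hA g v⟩
    simp only [mem_preimage, mem_inter_iff, mem_singleton_iff, hmem]
    exact and_congr_right fun hv => by rw [hφ g v hv, eq_inv_smul_iff]
  rw [pushforward, mass_smul, hpre]
  rfl

end Pushforward

section Overlap

variable [PartialOrder V] [Fintype W] [PartialOrder W]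

lemma mass_Iic (x : V → ℝ≥0) (a : V) : mass x (Iic a) = mass x (Iio a) + x a := by
  classical
  have hdisj : Disjoint (Iio a) {a} := disjoint_singleton_right.2 self_notMem_Iio
  simp only [mass]
  rw [← Iio_union_right, indicator_union_of_disjoint hdisj, Finset.sum_add_distrib]
  simp only [indicator_apply, mem_singleton_iff, Finset.sum_ite_eq', Finset.mem_univ, if_true]

lemma ne_zero_of_mass_Iio_lt_mass_Iic {x : V → ℝ≥0} {a : V}
    (h : mass x (Iio a) < mass x (Iic a)) : x a ≠ 0 := fun ha => by
  rw [mass_Iic, ha, add_zero] at h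
  exact h.false

lemma exists_mass_Iio_eq_zero {x : V → ℝ≥0} (hx : x ≠ 0) : ∃ a, x a ≠ 0 ∧ mass x (Iio a) = 0 := by
  obtain ⟨a, ha⟩ := Finset.exists_minimal (supp_nonempty hx)
  exact ⟨a, mem_supp.1 ha.prop,
    mass_eq_zero_iff.2 fun v hv => of_not_not fun hne => ha.not_lt (mem_supp.2 hne) hv⟩

/-- The weights on `V × W` describing a pair of weight functions as a point of the staircase
triangulation of a product of simplices: stack the weights of `x` along a half-line in the order of
`V`, and those of `y` in the order of `W`; the weight of `(a, b)` is the length of the intersection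
of the interval of `a` with that of `b`. -/
noncomputable def overlap (x : V → ℝ≥0) (y : W → ℝ≥0) : V × W → ℝ≥0 := fun p =>
  min (mass x (Iic p.1)) (mass y (Iic p.2)) - max (mass x (Iio p.1)) (mass y (Iio p.2))

variable {x : V → ℝ≥0} {y : W → ℝ≥0} {p q : V × W}

lemma overlap_ne_zero_iff : overlap x y p ≠ 0 ↔
    max (mass x (Iio p.1)) (mass y (Iio p.2)) < min (mass x (Iic p.1)) (mass y (Iic p.2)) := by
  rw [overlap, ne_eq, tsub_eq_zero_iff_le, not_le]

lemma fst_ne_zero_of_overlap_ne_zero (h : overlap x y p ≠ 0) : x p.1 ≠ 0 :=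
  ne_zero_of_mass_Iio_lt_mass_Iic <|
    (le_max_left _ _).trans_lt <| (overlap_ne_zero_iff.1 h).trans_le (min_le_left _ _)

lemma snd_ne_zero_of_overlap_ne_zero (h : overlap x y p ≠ 0) : y p.2 ≠ 0 :=
  ne_zero_of_mass_Iio_lt_mass_Iic <|
    (le_max_right _ _).trans_lt <| (overlap_ne_zero_iff.1 h).trans_le (min_le_right _ _)

lemma overlap_ne_zero (hx : x ≠ 0) (hy : y ≠ 0) : overlap x y ≠ 0 := by
  obtain ⟨a, ha, ha'⟩ := exists_mass_Iio_eq_zero hx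
  obtain ⟨b, hb, hb'⟩ := exists_mass_Iio_eq_zero hy
  refine ne_iff.2 ⟨(a, b), overlap_ne_zero_iff.2 ?_⟩
  simp only [mass_Iic, ha', hb', zero_add, max_self]
  exact lt_min ha.bot_lt hb.bot_lt

lemma not_snd_lt_of_fst_lt (hp : overlap x y p ≠ 0) (hq : overlap x y q ≠ 0) (h : p.1 < q.1) :
    ¬ q.2 < p.2 := fun h' => lt_irrefl (mass x (Iic p.1)) <| calc
  mass x (Iic p.1) ≤ mass x (Iio q.1) := mass_mono x fun _ hv => lt_of_le_of_lt hv h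
  _ < mass y (Iic q.2) :=
    (le_max_left _ _).trans_lt <| (overlap_ne_zero_iff.1 hq).trans_le (min_le_right _ _)
  _ ≤ mass y (Iio p.2) := mass_mono y fun _ hv => lt_of_le_of_lt hv h'
  _ < mass x (Iic p.1) :=
    (le_max_right _ _).trans_lt <| (overlap_ne_zero_iff.1 hp).trans_le (min_le_left _ _)

lemma le_or_le_of_overlap_ne_zero (hp : overlap x y p ≠ 0) (hq : overlap x y q ≠ 0)
    (h₁ : p.1 ≤ q.1 ∨ q.1 ≤ p.1) (h₂ : p.2 ≤ q.2 ∨ q.2 ≤ p.2) : p ≤ q ∨ q ≤ p := by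
  have hpq := not_snd_lt_of_fst_lt hp hq
  have hqp := not_snd_lt_of_fst_lt hq hp
  simp only [lt_iff_le_not_ge] at hpq hqp
  simp only [Prod.le_def]
  grind

lemma continuous_overlap :
    Continuous fun z : (V → ℝ≥0) × (W → ℝ≥0) => overlap z.1 z.2 := by
  refine continuous_pi fun p => ?_
  have hx (A : Set V) : Continuous fun z : (V → ℝ≥0) × (W → ℝ≥0) => mass z.1 A :=
    (continuous_mass A).comp continuous_fst
  have hy (B : Set W) : Continuous fun z : (V → ℝ≥0) × (W → ℝ≥0) => mass z.2 B :=
    (continuous_mass B).comp continuous_snd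
  exact ((hx _).min (hy _)).sub ((hx _).max (hy _))

end Overlap

end Weights

variable {G : Type} [Group G]

section Action

variable (K : GOSC G)

instance : MulAction G K.V where
  smul := K.smul
  one_smul := K.smul_one
  mul_smul := K.smul_mul

/-- The action of a group element on the vertices, as an order isomorphism. -/
def smulOrderIso (g : G) : K.V ≃o K.V :=
  (MulAction.toPerm g).toOrderIso (K.smul_mono g) (K.smul_mono g⁻¹)

lemma overlap_smul {K L : GOSC G} (g : G) (x : K.V → ℝ≥0) (y : L.V → ℝ≥0) :
    overlap (g • x) (g • y) = g • overlap x y := by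
  have preimage_Iic (M : GOSC G) (a : M.V) : (g • ·) ⁻¹' Iic a = Iic (g⁻¹ • a) :=
    (M.smulOrderIso g).preimage_Iic a
  have preimage_Iio (M : GOSC G) (a : M.V) : (g • ·) ⁻¹' Iio a = Iio (g⁻¹ • a) :=
    (M.smulOrderIso g).preimage_Iio a
  funext p
  simp only [overlap, mass_smul, preimage_Iic, preimage_Iio]
  rfl

end Action

section Cone

variable (K : GOSC G)

/-- The open cone over `|K|`: homogeneous coordinates for the points of the realization. -/
def cone : SubMulAction G (K.V → ℝ≥0) where
  carrier := {x | supp x ∈ K.faces}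
  smul_mem' g x hx := by
    have hsupp : supp (g • x) = (supp x).image (K.smul g) := by
      ext v
      rw [mem_supp, Finset.mem_image]
      refine ⟨fun h => ⟨g⁻¹ • v, mem_supp.2 h, smul_inv_smul g v⟩, ?_⟩
      rintro ⟨u, hu, rfl⟩
      exact (smul_apply_smul g x u).trans_ne (mem_supp.1 hu)
    change supp (g • x) ∈ K.faces
    exact hsupp ▸ K.smul_faces g (supp x) hx

variable {K}

lemma ne_zero_of_mem_cone {x : K.V → ℝ≥0} (hx : x ∈ K.cone) : x ≠ 0 := by
  rintro rfl
  obtain ⟨v, hv⟩ := K.nonempty_of_mem _ hx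
  exact mem_supp.1 hv rfl

lemma mem_cone_of_supp_subset {x : K.V → ℝ≥0} (hx : x ≠ 0) {s : Finset K.V} (hs : s ∈ K.faces)
    (h : ∀ v, x v ≠ 0 → v ∈ s) : x ∈ K.cone :=
  K.down_closed s hs _ (fun v hv => h v (mem_supp.1 hv)) (supp_nonempty hx)

variable (K) in
/-- The barycentric coordinates of a point of `|K|`, as homogeneous coordinates. -/
noncomputable def homogenize : C(K.Real, K.cone) where
  toFun x := ⟨fun v => (x.val v).toNNReal, by
    obtain ⟨hnonneg, hsum, s, hs, hsupp⟩ := x.prop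
    refine mem_cone_of_supp_subset (fun h => ?_) hs fun v hv => hsupp v fun h0 => hv ?_
    · refine one_ne_zero (hsum.symm.trans (Finset.sum_eq_zero fun v _ => ?_))
      exact (Real.toNNReal_eq_zero.1 (congrFun h v)).antisymm (hnonneg v)
    · simp only [h0, Real.toNNReal_zero]⟩
  continuous_toFun := by
    refine Continuous.subtype_mk (continuous_pi fun v => continuous_real_toNNReal.comp ?_) _
    exact (continuous_apply v).comp continuous_subtype_val

lemma val_ne_zero_of_homogenize_ne_zero {x : K.Real} {v : K.V} (h : (K.homogenize x).1 v ≠ 0) :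
    x.val v ≠ 0 := fun h0 => h ((congrArg Real.toNNReal h0).trans Real.toNNReal_zero)

lemma isEquivariant_homogenize : IsEquivariant G K.homogenize := fun _ _ => rfl

variable (K) in
/-- The point of `|K|` with given homogeneous coordinates. -/
noncomputable def normalize : C(K.cone, K.Real) where
  toFun x := ⟨fun v => (x.1 v / mass x.1 univ : ℝ≥0), by
    have hmass := mass_univ_ne_zero (ne_zero_of_mem_cone x.2)
    refine ⟨fun v => NNReal.coe_nonneg _, ?_, supp x.1, x.2, fun v hv => mem_supp.2 ?_⟩
    · rw [← NNReal.coe_sum, ← Finset.sum_div, ← mass_univ, div_self hmass, NNReal.coe_one]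
    · exact (div_ne_zero_iff.1 (NNReal.coe_ne_zero.1 hv)).1⟩
  continuous_toFun := by
    refine Continuous.subtype_mk (continuous_pi fun v => NNReal.continuous_coe.comp ?_) _
    exact ((continuous_apply v).comp continuous_subtype_val).div
      ((continuous_mass _).comp continuous_subtype_val)
      fun x => mass_univ_ne_zero (ne_zero_of_mem_cone x.2)

lemma ne_zero_of_normalize_ne_zero {x : K.cone} {v : K.V} (h : (K.normalize x).val v ≠ 0) :
    x.1 v ≠ 0 :=
  (div_ne_zero_iff.1 (NNReal.coe_ne_zero.1 h)).1

lemma isEquivariant_normalize : IsEquivariant G K.normalize := fun g x => by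
  have hmass : mass (g • x).1 univ = mass x.1 univ := mass_smul g x.1 univ
  exact Subtype.ext (funext fun v => congrArg NNReal.toReal (by rw [hmass]; rfl))

lemma overlap_mem_cone {L : GOSC G} {x : K.V → ℝ≥0} {y : L.V → ℝ≥0} (hx : x ∈ K.cone)
    (hy : y ∈ L.cone) : overlap x y ∈ (K.prod L).cone := by
  have hne := supp_nonempty (overlap_ne_zero (ne_zero_of_mem_cone hx) (ne_zero_of_mem_cone hy))
  have fst_mem p (hp : p ∈ supp (overlap x y)) : p.1 ∈ supp x :=
    mem_supp.2 (fst_ne_zero_of_overlap_ne_zero (mem_supp.1 hp))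
  have snd_mem p (hp : p ∈ supp (overlap x y)) : p.2 ∈ supp y :=
    mem_supp.2 (snd_ne_zero_of_overlap_ne_zero (mem_supp.1 hp))
  refine ⟨hne, fun p hp q hq => le_or_le_of_overlap_ne_zero (mem_supp.1 hp) (mem_supp.1 hq)
    (K.face_chain _ hx _ (fst_mem p hp) _ (fst_mem q hq))
    (L.face_chain _ hy _ (snd_mem p hp) _ (snd_mem q hq)), ?_, ?_⟩
  · exact K.down_closed _ hx _ (Finset.image_subset_iff.2 fst_mem) (hne.image _)
  · exact L.down_closed _ hy _ (Finset.image_subset_iff.2 snd_mem) (hne.image _)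

variable (K) in
/-- On pairs of equal total weight, the staircase map `|K| × |L| → |K × L|` in homogeneous
coordinates; otherwise the excess weight of one component is discarded. -/
noncomputable def stairs (L : GOSC G) : C(K.cone × L.cone, (K.prod L).cone) where
  toFun z := ⟨overlap z.1.1 z.2.1, overlap_mem_cone z.1.2 z.2.2⟩
  continuous_toFun := Continuous.subtype_mk (continuous_overlap.comp
    (continuous_subtype_val.prodMap continuous_subtype_val)) _

lemma isEquivariant_stairs (L : GOSC G) : IsEquivariant G (K.stairs L) :=
  fun g z => Subtype.ext (overlap_smul g z.1.1 z.2.1)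

end Cone

section Subdivision

variable {M : GOSC G}

lemma tau_mem (s : M.sd.V) : M.tau s ∈ s.1 :=
  (Classical.choose_spec (M.exists_greatest s.1 s.2)).1

lemma le_tau (s : M.sd.V) {v : M.V} (hv : v ∈ s.1) : v ≤ M.tau s :=
  (Classical.choose_spec (M.exists_greatest s.1 s.2)).2 v hv

lemma isEquivariant_tau : IsEquivariant G M.tau := fun g s => by
  refine le_antisymm ?_ (le_tau (g • s) (Finset.mem_image_of_mem _ (tau_mem s)))
  obtain ⟨u, hu, hgu⟩ := Finset.mem_image.1 (tau_mem (g • s))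
  exact hgu ▸ M.smul_mono g u (M.tau s) (le_tau s hu)

/-- The coordinates in the subdivision of the point with coordinates `x`: the coefficients writing
`x` as a combination of indicator functions of a chain of simplices. The chain consists of the
superlevel sets of `x`, and the coefficient of each is the gap between the values of `x` on it and
off it. -/
noncomputable def barycentric (x : M.V → ℝ≥0) : M.sd.V → ℝ≥0 := fun s =>
  s.1.inf' (M.nonempty_of_mem s.1 s.2) x - s.1ᶜ.sup x

variable {x : M.V → ℝ≥0} {s t : M.sd.V}

lemma barycentric_ne_zero_iff : barycentric x s ≠ 0 ↔ ∀ v ∈ s.1, s.1ᶜ.sup x < x v := by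
  rw [barycentric, ne_eq, tsub_eq_zero_iff_le, not_le, Finset.lt_inf'_iff]

lemma ne_zero_of_barycentric_ne_zero (h : barycentric x s ≠ 0) {v : M.V} (hv : v ∈ s.1) :
    x v ≠ 0 :=
  (barycentric_ne_zero_iff.1 h v hv).ne_bot

lemma lt_of_barycentric_ne_zero (h : barycentric x s ≠ 0) {u v : M.V} (hu : u ∉ s.1)
    (hv : v ∈ s.1) : x u < x v :=
  (Finset.le_sup (Finset.mem_compl.2 hu)).trans_lt (barycentric_ne_zero_iff.1 h v hv)

lemma le_or_le_of_barycentric_ne_zero (hs : barycentric x s ≠ 0) (ht : barycentric x t ≠ 0) :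
    s ≤ t ∨ t ≤ s := by
  by_contra! h
  obtain ⟨v, hvs, hvt⟩ := Finset.not_subset.1 h.1
  obtain ⟨u, hut, hus⟩ := Finset.not_subset.1 h.2
  exact lt_asymm (lt_of_barycentric_ne_zero hs hus hvs) (lt_of_barycentric_ne_zero ht hvt hut)

lemma barycentric_supp_ne_zero (hx : supp x ∈ M.faces) : barycentric x ⟨supp x, hx⟩ ≠ 0 := by
  refine barycentric_ne_zero_iff.2 fun v hv => ?_
  have hsup : (supp x)ᶜ.sup x = 0 := (Finset.sup_eq_bot_iff _ _).2 fun u hu =>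
    of_not_not fun hne => Finset.mem_compl.1 hu (mem_supp.2 hne)
  exact hsup.trans_lt (mem_supp.1 hv).bot_lt

lemma mem_sd_faces {σ : Finset M.sd.V} :
    σ ∈ M.sd.faces ↔ σ.Nonempty ∧ ∀ s ∈ σ, ∀ t ∈ σ, s ≤ t ∨ t ≤ s :=
  Iff.rfl

lemma barycentric_mem_cone (hx : x ∈ M.cone) : barycentric x ∈ M.sd.cone :=
  mem_sd_faces.2 ⟨⟨⟨supp x, hx⟩, mem_supp.2 (barycentric_supp_ne_zero hx)⟩, fun _ hs _ ht =>
    le_or_le_of_barycentric_ne_zero (mem_supp.1 hs) (mem_supp.1 ht)⟩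

lemma isEquivariant_barycentric : IsEquivariant G (barycentric (M := M)) := fun g x => by
  funext s
  have hinf : (g⁻¹ • s).1.inf' (M.nonempty_of_mem _ (g⁻¹ • s).2) x = s.1.inf' _ (g • x) :=
    Finset.inf'_image _ x
  have hcompl : (s.1.image (M.smul g⁻¹))ᶜ = s.1ᶜ.image (M.smul g⁻¹) := Finset.coe_injective <| by
    simp only [Finset.coe_compl, Finset.coe_image]
    exact (image_compl_eq (MulAction.bijective g⁻¹)).symm
  have hsup : (g⁻¹ • s).1ᶜ.sup x = s.1ᶜ.sup (g • x) :=
    (congrArg (Finset.sup · x) hcompl).trans (Finset.sup_image _ _ x)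
  exact (congrArg₂ (· - ·) hinf hsup).symm

lemma continuous_barycentric : Continuous (barycentric (M := M)) :=
  continuous_pi fun _ =>
    (Continuous.finset_inf'_apply _ fun v _ => continuous_apply v).sub
      (Continuous.finset_sup_apply fun v _ => continuous_apply v)

variable (M) in
/-- The canonical map `|M| → |sd M|`, in homogeneous coordinates. -/
noncomputable def subdivide : C(M.cone, M.sd.cone) where
  toFun x := ⟨barycentric x.1, barycentric_mem_cone x.2⟩
  continuous_toFun := Continuous.subtype_mk (continuous_barycentric.comp continuous_subtype_val) _

lemma isEquivariant_subdivide : IsEquivariant G M.subdivide := fun g x =>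
  Subtype.ext (isEquivariant_barycentric g x.1)

/-- The canonical map `|M| → |sdⁿ M|`, in homogeneous coordinates. -/
noncomputable def subdivideIter : (n : ℕ) → (M : GOSC G) → C(M.cone, (sdIter n M).cone)
  | 0, _ => ContinuousMap.id _
  | n + 1, M => (sdIter n M).subdivide.comp (subdivideIter n M)

lemma isEquivariant_subdivideIter : ∀ n, IsEquivariant G (subdivideIter n M)
  | 0 => fun _ _ => rfl
  | n + 1 => isEquivariant_subdivide.comp (isEquivariant_subdivideIter n)

lemma ne_zero_of_subdivideIter_ne_zero : ∀ (n : ℕ) {x : M.cone} {v : (sdIter n M).V},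
    (subdivideIter n M x).1 v ≠ 0 → x.1 (tauIter n M v) ≠ 0
  | 0, _, _, h => h
  | n + 1, _, v, h =>
    ne_zero_of_subdivideIter_ne_zero n (ne_zero_of_barycentric_ne_zero h (tau_mem v))

end Subdivision

section StraightLine

variable {K : GOSC G}

/-- Some simplex carries both points, so that the segment between them lies in `|K|`. -/
def InCommonFace (x y : K.Real) : Prop :=
  ∃ s ∈ K.faces, (∀ v, x.val v ≠ 0 → v ∈ s) ∧ ∀ v, y.val v ≠ 0 → v ∈ s

lemma InCommonFace.lineMap_mem_realSet {x y : K.Real} (h : InCommonFace x y) (t : unitInterval) :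
    AffineMap.lineMap x.val y.val (t : ℝ) ∈ K.realSet := by
  obtain ⟨s, hs, hx, hy⟩ := h
  have hsimplex := (convex_stdSimplex ℝ K.V).lineMap_mem
    ⟨x.prop.1, x.prop.2.1⟩ ⟨y.prop.1, y.prop.2.1⟩ t.2
  refine ⟨hsimplex.1, hsimplex.2, s, hs, fun v => not_imp_comm.1 fun hv => ?_⟩
  have hxv : x.val v = 0 := of_not_not fun h => hv (hx v h)
  have hyv : y.val v = 0 := of_not_not fun h => hv (hy v h)
  rw [AffineMap.pi_lineMap_apply, hxv, hyv, AffineMap.lineMap_same_apply]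

lemma homotopicWith_of_inCommonFace {Y : Type*} [TopologicalSpace Y] [SMul G Y] {p q : C(Y, K.Real)}
    (hp : IsEquivariant G p) (hq : IsEquivariant G q) (h : ∀ y, InCommonFace (p y) (q y)) :
    p.HomotopicWith q (IsEquivariant G ·) :=
  ⟨{ toFun z := ⟨AffineMap.lineMap (p z.2).val (q z.2).val (z.1 : ℝ),
       (h z.2).lineMap_mem_realSet z.1⟩
     continuous_toFun := by
       have hval : Continuous fun x : K.Real => x.val := continuous_subtype_val
       exact Continuous.subtype_mk (((hval.comp p.continuous).comp continuous_snd).lineMap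
         ((hval.comp q.continuous).comp continuous_snd)
         (continuous_subtype_val.comp continuous_fst)) _
     map_zero_left y := Subtype.ext (AffineMap.lineMap_apply_zero _ _)
     map_one_left y := Subtype.ext (AffineMap.lineMap_apply_one _ _)
     prop' t g y := by
       refine Subtype.ext ?_
       change AffineMap.lineMap (p (g • y)).val (q (g • y)).val (t : ℝ) = _
       rw [hp, hq]
       rfl }⟩

end StraightLine

section DerivedNeighbourhood

variable {M K : GOSC G} {Λ : Set (Finset M.V)}

/-- The points having a nonzero coordinate at some simplex of `Λ`, in the subdivision: the open
star of `sd Λ` in `sd M`, in homogeneous coordinates. -/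
def derivedNhd (Λ : Set (Finset M.V)) (hΛ : ∀ g : G, ∀ s ∈ Λ, s.image (M.smul g) ∈ Λ) :
    SubMulAction G M.cone where
  carrier := {x | ∃ s : M.sd.V, s.1 ∈ Λ ∧ barycentric x.1 s ≠ 0}
  smul_mem' := by
    rintro g x ⟨s, hs, hne⟩
    refine ⟨g • s, hΛ g _ hs, ?_⟩
    rw [SubMulAction.val_smul, isEquivariant_barycentric, smul_apply_smul]
    exact hne

variable {hΛ : ∀ g : G, ∀ s ∈ Λ, s.image (M.smul g) ∈ Λ}

lemma isOpen_derivedNhd : IsOpen (derivedNhd Λ hΛ : Set M.cone) := by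
  have hcont (s : M.sd.V) : Continuous fun x : M.cone => barycentric x.1 s :=
    (continuous_apply s).comp (continuous_barycentric.comp continuous_subtype_val)
  change IsOpen {x : M.cone | ∃ s : M.sd.V, s.1 ∈ Λ ∧ barycentric x.1 s ≠ 0}
  simp only [ofPred_exists]
  exact isOpen_iUnion fun s => isOpen_const.and (isOpen_ne_fun (hcont s) continuous_const)

lemma exists_top_of_mem_derivedNhd (x : derivedNhd Λ hΛ) :
    ∃ t ∈ Λ, ∀ s : M.sd.V, s.1 ∈ Λ → barycentric x.1.1 s ≠ 0 → s.1 ⊆ t := by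
  classical
  obtain ⟨x, s₀, hs₀, hne₀⟩ := x
  set σ := (supp (barycentric x.1)).filter (·.1 ∈ Λ)
  have mem_σ {s : M.sd.V} : s ∈ σ ↔ barycentric x.1 s ≠ 0 ∧ s.1 ∈ Λ := by
    rw [Finset.mem_filter, mem_supp]
  have hσ : σ ∈ M.sd.faces := M.sd.down_closed _ (barycentric_mem_cone x.2) σ
    (Finset.filter_subset _ _) ⟨s₀, mem_σ.2 ⟨hne₀, hs₀⟩⟩
  obtain ⟨t, ht, hmax⟩ := M.sd.exists_greatest σ hσ
  exact ⟨t.1, (mem_σ.1 ht).2, fun s hs hne => hmax s (mem_σ.2 ⟨hne, hs⟩)⟩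

variable {φ ψ : M.V → K.V}

lemma pushforward_barycentric_mem_cone (hφ : ∀ s ∈ Λ, s.image φ ∈ K.faces) (x : derivedNhd Λ hΛ) :
    pushforward {s : M.sd.V | s.1 ∈ Λ} (φ ∘ M.tau) (barycentric x.1.1) ∈ K.cone := by
  obtain ⟨t, ht, hmax⟩ := exists_top_of_mem_derivedNhd x
  obtain ⟨s₀, hs₀, hne₀⟩ := x.2
  refine mem_cone_of_supp_subset (ne_iff.2 ⟨_, pushforward_ne_zero_iff.2 ⟨s₀, hs₀, rfl, hne₀⟩⟩)
    (hφ t ht) fun w hw => ?_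
  obtain ⟨s, hs, rfl, hne⟩ := pushforward_ne_zero_iff.1 hw
  exact Finset.mem_image_of_mem φ (hmax s hs hne (tau_mem s))

/-- The extension to `derivedNhd Λ` of the realization of a simplicial map on `Λ`. -/
noncomputable def realizeOn (hΛ : ∀ g : G, ∀ s ∈ Λ, s.image (M.smul g) ∈ Λ) (φ : M.V → K.V)
    (hφ : ∀ s ∈ Λ, s.image φ ∈ K.faces) : C(derivedNhd Λ hΛ, K.Real) where
  toFun x := K.normalize ⟨_, pushforward_barycentric_mem_cone hφ x⟩
  continuous_toFun := K.normalize.continuous.comp <| Continuous.subtype_mk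
    ((continuous_pushforward _ _).comp <| continuous_barycentric.comp <|
      continuous_subtype_val.comp continuous_subtype_val) _

lemma exists_of_realizeOn_ne_zero {hφ : ∀ s ∈ Λ, s.image φ ∈ K.faces} {x : derivedNhd Λ hΛ}
    {w : K.V} (hw : (realizeOn hΛ φ hφ x).val w ≠ 0) :
    ∃ s : M.sd.V, s.1 ∈ Λ ∧ φ (M.tau s) = w ∧ barycentric x.1.1 s ≠ 0 :=
  pushforward_ne_zero_iff.1 (ne_zero_of_normalize_ne_zero hw)

lemma isEquivariant_realizeOn (hφ : ∀ s ∈ Λ, s.image φ ∈ K.faces)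
    (hequiv : ∀ g : G, ∀ s ∈ Λ, ∀ v ∈ s, φ (M.smul g v) = K.smul g (φ v)) :
    IsEquivariant G (realizeOn hΛ φ hφ) := fun g x => by
  refine (congrArg K.normalize (Subtype.ext ?_)).trans (isEquivariant_normalize g _)
  have htau (g : G) (s : M.sd.V) (hs : s.1 ∈ Λ) : (φ ∘ M.tau) (g • s) = g • (φ ∘ M.tau) s :=
    (congrArg φ (isEquivariant_tau g s)).trans (hequiv g s.1 hs _ (tau_mem s))
  exact (congrArg _ (isEquivariant_barycentric g x.1.1)).trans
    (pushforward_smul (fun g s hs => hΛ g s.1 hs) htau g _)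

lemma inCommonFace_realizeOn_of_contiguous (hφ : ∀ s ∈ Λ, s.image φ ∈ K.faces)
    (hψ : ∀ s ∈ Λ, s.image ψ ∈ K.faces) (h : ∀ s ∈ Λ, s.image φ ∪ s.image ψ ∈ K.faces)
    (x : derivedNhd Λ hΛ) : InCommonFace (realizeOn hΛ φ hφ x) (realizeOn hΛ ψ hψ x) := by
  obtain ⟨t, ht, hmax⟩ := exists_top_of_mem_derivedNhd x
  refine ⟨_, h t ht, fun w hw => ?_, fun w hw => ?_⟩ <;>
    obtain ⟨s, hs, rfl, hne⟩ := exists_of_realizeOn_ne_zero hw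
  · exact Finset.mem_union_left _ (Finset.mem_image_of_mem φ (hmax s hs hne (tau_mem s)))
  · exact Finset.mem_union_right _ (Finset.mem_image_of_mem ψ (hmax s hs hne (tau_mem s)))

lemma inCommonFace_realizeOn_of_carrier (hφ : ∀ s ∈ Λ, s.image φ ∈ K.faces) {x : derivedNhd Λ hΛ}
    {y : K.Real} (h : ∀ s ∈ Λ, ∀ v ∈ s, x.1.1 v ≠ 0 → y.val (φ v) ≠ 0) :
    InCommonFace y (realizeOn hΛ φ hφ x) := by
  obtain ⟨-, -, t, ht, hy⟩ := y.prop
  refine ⟨t, ht, hy, fun w hw => ?_⟩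
  obtain ⟨s, hs, rfl, hne⟩ := exists_of_realizeOn_ne_zero hw
  exact hy _ (h s.1 hs _ (tau_mem s) (ne_zero_of_barycentric_ne_zero hne (tau_mem s)))

end DerivedNeighbourhood

section Navigation

variable {M K : GOSC G} {Λ : Set (Finset M.V)} {hΛ : ∀ g : G, ∀ s ∈ Λ, s.image (M.smul g) ∈ Λ}

lemma homotopicWith_realizeOn_of_contiguous {c : ℕ} {φ : Fin (c + 1) → M.V → K.V}
    (hsimp : ∀ j, ∀ s ∈ Λ, s.image (φ j) ∈ K.faces)
    (hequiv : ∀ j, ∀ g : G, ∀ s ∈ Λ, ∀ v ∈ s, φ j (M.smul g v) = K.smul g (φ j v))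
    (hcontig : ∀ j : Fin c, ∀ s ∈ Λ, s.image (φ j.castSucc) ∪ s.image (φ j.succ) ∈ K.faces)
    {Y : Type*} [TopologicalSpace Y] [SMul G Y] {f : C(Y, derivedNhd Λ hΛ)}
    (hf : IsEquivariant G f) (j : Fin (c + 1)) :
    ((realizeOn hΛ (φ 0) (hsimp 0)).comp f).HomotopicWith
      ((realizeOn hΛ (φ j) (hsimp j)).comp f) (IsEquivariant G ·) := by
  have hreal j : IsEquivariant G ((realizeOn hΛ (φ j) (hsimp j)).comp f) :=
    (isEquivariant_realizeOn (hsimp j) (hequiv j)).comp hf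
  induction j using Fin.induction with
  | zero => exact .refl _ (hreal 0)
  | succ j ih =>
    exact ih.trans <| homotopicWith_of_inCommonFace (hreal _) (hreal _) fun y =>
      inCommonFace_realizeOn_of_contiguous (hsimp _) (hsimp _) (hcontig j) (f y)

variable {Φ : C(K.Real × K.Real, M.cone)} {π₁ π₂ : M.V → K.V}

lemma ContigOn.eqNavigable {c : ℕ} (h : ContigOn M K π₁ π₂ Λ c) (hΦ : IsEquivariant G Φ)
    (hπ₁ : ∀ z v, (Φ z).1 v ≠ 0 → z.1.val (π₁ v) ≠ 0)
    (hπ₂ : ∀ z v, (Φ z).1 v ≠ 0 → z.2.val (π₂ v) ≠ 0) :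
    EqNavigable G K.Real (hΦ.preimage (derivedNhd Λ hΛ) : Set (K.Real × K.Real)) := by
  obtain ⟨φ, hfirst, hlast, hsimp, hequiv, hcontig⟩ := h
  let U := hΦ.preimage (derivedNhd Λ hΛ)
  let f : C(U, derivedNhd Λ hΛ) :=
    ⟨fun u => ⟨Φ u.1, u.2⟩, (Φ.continuous.comp continuous_subtype_val).subtype_mk _⟩
  let p : C(U, K.Real) := ⟨fun u => u.1.1, continuous_fst.comp continuous_subtype_val⟩
  let q : C(U, K.Real) := ⟨fun u => u.1.2, continuous_snd.comp continuous_subtype_val⟩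
  have hp : IsEquivariant G p := fun _ _ => rfl
  have hq : IsEquivariant G q := fun _ _ => rfl
  have hf : IsEquivariant G f := fun g u => Subtype.ext (hΦ g u.1)
  have hreal j : IsEquivariant G ((realizeOn hΛ (φ j) (hsimp j)).comp f) :=
    (isEquivariant_realizeOn (hsimp j) (hequiv j)).comp hf
  have p_to_first := homotopicWith_of_inCommonFace hp (hreal 0) fun u =>
    inCommonFace_realizeOn_of_carrier (hsimp 0) (x := f u) fun s hs v hv hne =>
      hfirst s hs v hv ▸ hπ₁ u.1 v hne
  have q_to_last := homotopicWith_of_inCommonFace hq (hreal (Fin.last c)) fun u =>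
    inCommonFace_realizeOn_of_carrier (hsimp (Fin.last c)) (x := f u) fun s hs v hv hne =>
      hlast s hs v hv ▸ hπ₂ u.1 v hne
  have first_to_last := homotopicWith_realizeOn_of_contiguous hsimp hequiv hcontig hf (Fin.last c)
  exact eqNavigable_of_homotopicWith_s3 (fun _ => rfl) (fun _ => rfl)
    ((p_to_first.trans first_to_last).trans q_to_last.symm)

lemma eqTC_le_of_contigOn {n c : ℕ} {Λ : Fin n → Set (Finset M.V)}
    (hinv : ∀ i, ∀ g : G, ∀ s ∈ Λ i, s.image (M.smul g) ∈ Λ i) (hcover : M.faces ⊆ ⋃ i, Λ i)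
    (hcontig : ∀ i, ContigOn M K π₁ π₂ (Λ i) c) (hΦ : IsEquivariant G Φ)
    (hπ₁ : ∀ z v, (Φ z).1 v ≠ 0 → z.1.val (π₁ v) ≠ 0)
    (hπ₂ : ∀ z v, (Φ z).1 v ≠ 0 → z.2.val (π₂ v) ≠ 0) : eqTC G K.Real ≤ n := by
  refine sInf_le ⟨n, rfl, fun i => hΦ.preimage (derivedNhd (Λ i) (hinv i)),
    fun i => (isOpen_derivedNhd (hΛ := hinv i)).preimage Φ.continuous,
    fun i g z hz => SubMulAction.smul_mem _ g hz,
    eq_univ_of_forall fun z => ?_, fun i => (hcontig i).eqNavigable hΦ hπ₁ hπ₂⟩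
  obtain ⟨i, hi⟩ := mem_iUnion.1 (hcover (Φ z).2)
  exact mem_iUnion.2 ⟨i, ⟨supp (Φ z).1, (Φ z).2⟩, hi, barycentric_supp_ne_zero (Φ z).2⟩

end Navigation

section SquareCoordinates

/-- The canonical map `|K| × |K| → |sdᵇ (K × K)|`, in homogeneous coordinates. -/
noncomputable def squareCoordinates (b : ℕ) (K : GOSC G) :
    C(K.Real × K.Real, (sdIter b (K.prod K)).cone) :=
  (subdivideIter b _).comp ((K.stairs K).comp (K.homogenize.prodMap K.homogenize))

variable {K : GOSC G} {b : ℕ}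

lemma isEquivariant_squareCoordinates : IsEquivariant G (K.squareCoordinates b) :=
  (isEquivariant_subdivideIter b).comp <|
    (isEquivariant_stairs K).comp (isEquivariant_homogenize.prodMap isEquivariant_homogenize)

variable {z : K.Real × K.Real} {v : (sdIter b (K.prod K)).V}

lemma val_fst_ne_zero_of_squareCoordinates_ne_zero (h : (K.squareCoordinates b z).1 v ≠ 0) :
    z.1.val (tauIter b (K.prod K) v).1 ≠ 0 :=
  val_ne_zero_of_homogenize_ne_zero <|
    fst_ne_zero_of_overlap_ne_zero (ne_zero_of_subdivideIter_ne_zero b h)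

lemma val_snd_ne_zero_of_squareCoordinates_ne_zero (h : (K.squareCoordinates b z).1 v ≠ 0) :
    z.2.val (tauIter b (K.prod K) v).2 ≠ 0 :=
  val_ne_zero_of_homogenize_ne_zero <|
    snd_ne_zero_of_overlap_ne_zero (ne_zero_of_subdivideIter_ne_zero b h)

end SquareCoordinates

end GOSC

theorem eqTC_real_le_SCG_general (G : Type) [Group G] (K : GOSC G) : eqTC G K.Real ≤ K.SCG := by
  refine le_iInf₂ fun b c => le_sInf ?_
  rintro _ ⟨n, rfl, Λ, -, -, hinv, hcover, hcontig⟩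
  exact GOSC.eqTC_le_of_contigOn hinv hcover hcontig GOSC.isEquivariant_squareCoordinates
    (fun _ _ => GOSC.val_fst_ne_zero_of_squareCoordinates_ne_zero)
    (fun _ _ => GOSC.val_snd_ne_zero_of_squareCoordinates_ne_zero)

/-- Let `G` be a finite group and `K` an ordered `G`-simplicial complex.
Then `TC_G(|K|) ≤ SC_G(K)`: the equivariant topological complexity of the geometric
realization of `K` is at most the equivariant simplicial complexity of `K`. -/
theorem eqTC_real_le_SCG (G : Type) [Group G] [Finite G] (K : GOSC G) :
    eqTC G K.Real ≤ K.SCG :=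
  eqTC_real_le_SCG_general G K
end
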